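/- For every even positive integer n, there exists a positive integer m that is a multiple of n such that ω*(m) = ω*(n) + 1. -/

import Mathlib

open Filter Real

/-- `ω*(n)`: the number of divisors `d` of `n` such that `d + 1` is prime. -/
def omegaStar (n : ℕ) : ℕ := (n.divisors.filter (fun d => Nat.Prime (d + 1))).card


lemma crt_sum_two (a b : ℕ) (ha : 0 < a) (hb : 0 < b) (hab : Nat.Coprime a b) (f g : ℕ → ℝ) :
    ∑ t ∈ Finset.range (a * b), f (t % a) * g (t % b)
      = (∑ t ∈ Finset.range a, f t) * (∑ t ∈ Finset.range b, g t) := by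
  rw [Finset.sum_mul_sum, ← Finset.sum_product']
  refine Finset.sum_bij' (fun t _ => (t % a, t % b))
    (fun p _ => (Nat.chineseRemainder hab p.1 p.2 : ℕ)) ?_ ?_ ?_ ?_ ?_
  · intro t ht
    simp only [Finset.mem_product, Finset.mem_range]
    exact ⟨Nat.mod_lt _ ha, Nat.mod_lt _ hb⟩
  · intro p hp
    simp only [Finset.mem_range]
    exact Nat.chineseRemainder_lt_mul hab _ _ ha.ne' hb.ne'
  · intro t ht
    simp only [Finset.mem_range] at ht
    symm
    have := Nat.chineseRemainder_modEq_unique hab (a := t % a) (b := t % b) (z := t)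
      (Nat.mod_modEq t a).symm (Nat.mod_modEq t b).symm
    have h2 := Nat.chineseRemainder_lt_mul hab (t % a) (t % b) ha.ne' hb.ne'
    exact Nat.ModEq.eq_of_lt_of_lt this ht h2
  · intro p hp
    simp only [Finset.mem_product, Finset.mem_range] at hp
    have := (Nat.chineseRemainder hab p.1 p.2).2
    ext
    · have h := this.1
      simp only [Nat.ModEq] at h
      simpa [Nat.mod_eq_of_lt hp.1] using h
    · have h := this.2
      simp only [Nat.ModEq] at h
      simpa [Nat.mod_eq_of_lt hp.2] using h
  · intro t ht; rfl

lemma crt_sum (U : Finset ℕ) (hU : ∀ r ∈ U, r.Prime) (v : ℕ → ℕ → ℝ) :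
    ∑ t ∈ Finset.range (∏ r ∈ U, r), ∏ r ∈ U, v r (t % r)
      = ∏ r ∈ U, ∑ t ∈ Finset.range r, v r t := by
  classical
  induction U using Finset.induction_on with
  | empty => simp
  | insert p U hp ih =>
    have hUp : ∀ r ∈ U, r.Prime := fun r hr => hU r (Finset.mem_insert_of_mem hr)
    have hpp : p.Prime := hU p (Finset.mem_insert_self _ _)
    rw [Finset.prod_insert hp, Finset.prod_insert hp, ← ih hUp]
    rw [← crt_sum_two p (∏ r ∈ U, r) hpp.pos
      (Finset.prod_pos fun r hr => (hUp r hr).pos) ?_ (v p) (fun t => ∏ r ∈ U, v r (t % r))]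
    · refine Finset.sum_congr rfl fun t _ => ?_
      rw [Finset.prod_insert hp]
      congr 1
      refine Finset.prod_congr rfl fun r hr => ?_
      rw [Nat.mod_mod_of_dvd _ (Finset.dvd_prod_of_mem _ hr)]
    · refine Nat.Coprime.prod_right fun r hr => ?_
      exact (Nat.coprime_primes hpp (hUp r hr)).2 (fun h => hp (h ▸ hr))

/-- sum of a bounded periodic function with zero mean -/
lemma periodic_sum_zero (Q : ℕ) (hQ : 0 < Q) (g : ℕ → ℝ) (c : ℝ) (hper : ∀ t, g (t + Q) = g t)
    (hb : ∀ t, |g t| ≤ c) (h0 : ∑ t ∈ Finset.range Q, g t = 0) (X : ℕ) :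
    |∑ t ∈ Finset.range X, g t| ≤ Q * c := by
  have hc : 0 ≤ c := (abs_nonneg _).trans (hb 0)
  induction X using Nat.strong_induction_on with
  | _ X ih =>
    rcases lt_or_ge X Q with h | h
    · calc |∑ t ∈ Finset.range X, g t| ≤ ∑ t ∈ Finset.range X, |g t| :=
            Finset.abs_sum_le_sum_abs _ _
        _ ≤ ∑ t ∈ Finset.range X, c := Finset.sum_le_sum fun t _ => hb t
        _ = X * c := by simp
        _ ≤ Q * c := by gcongr
    · obtain ⟨Y, rfl⟩ := Nat.exists_eq_add_of_le h
      rw [Finset.sum_range_add, h0, zero_add]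
      have := ih Y (by omega)
      simpa [add_comm Q, hper] using this

lemma periodic_sum_nonneg (Q : ℕ) (hQ : 0 < Q) (g : ℕ → ℝ) (h : ℝ) (hper : ∀ t, g (t + Q) = g t)
    (hb : ∀ t, 0 ≤ g t) (h0 : ∑ t ∈ Finset.range Q, g t = Q * h) (X : ℕ) :
    ∑ t ∈ Finset.range X, g t ≤ (X + Q) * h := by
  have hh : 0 ≤ h := by
    have : 0 ≤ Q * h := h0 ▸ Finset.sum_nonneg fun t _ => hb t
    exact nonneg_of_mul_nonneg_right this (by positivity)
  induction X using Nat.strong_induction_on with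
  | _ X ih =>
    rcases lt_or_ge X Q with h' | h'
    · calc ∑ t ∈ Finset.range X, g t ≤ ∑ t ∈ Finset.range Q, g t :=
            Finset.sum_le_sum_of_subset_of_nonneg (Finset.range_mono h'.le) fun t _ _ => hb t
        _ = Q * h := h0
        _ ≤ (X + Q) * h := by gcongr; simp
    · obtain ⟨Y, rfl⟩ := Nat.exists_eq_add_of_le h'
      rw [Finset.sum_range_add, h0]
      have := ih Y (by omega)
      have h2 : ∑ x ∈ Finset.range Y, g (Q + x) = ∑ x ∈ Finset.range Y, g x :=
        Finset.sum_congr rfl fun x _ => by rw [add_comm, hper]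
      rw [h2]; push_cast; linarith

/-- local sieve function -/
noncomputable def sieveFun (k : ℕ) (Ω : ℕ → Finset ℕ) (r t : ℕ) : ℝ :=
  if t ∈ Ω r then -1 else (k : ℝ) / (r - k)

lemma sieveFun_sum (k r : ℕ) (hk : k < r) (Ω : ℕ → Finset ℕ) (h1 : Ω r ⊆ Finset.range r)
    (h2 : (Ω r).card = k) : ∑ t ∈ Finset.range r, sieveFun k Ω r t = 0 := by
  have hr : (0 : ℝ) < r - k := by rw [sub_pos]; exact_mod_cast hk
  rw [← Finset.sum_sdiff h1]
  have e1 : ∑ t ∈ Finset.range r \ Ω r, sieveFun k Ω r t = (r - k : ℕ) * ((k : ℝ) / (r - k)) := by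
    rw [Finset.sum_congr rfl (g := fun _ => (k : ℝ) / (r - k))]
    · rw [Finset.sum_const, Finset.card_sdiff_of_subset h1, h2]; simp
    · intro t ht; simp [sieveFun, (Finset.mem_sdiff.1 ht).2]
  have e2 : ∑ t ∈ Ω r, sieveFun k Ω r t = -k := by
    rw [Finset.sum_congr rfl (g := fun _ => (-1 : ℝ))]
    · rw [Finset.sum_const, h2]; simp
    · intro t ht; simp [sieveFun, ht]
  rw [e1, e2, Nat.cast_sub hk.le]; field_simp; ring

lemma sieveFun_sum_sq (k r : ℕ) (hk : k < r) (Ω : ℕ → Finset ℕ) (h1 : Ω r ⊆ Finset.range r)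
    (h2 : (Ω r).card = k) :
    ∑ t ∈ Finset.range r, sieveFun k Ω r t * sieveFun k Ω r t = r * ((k : ℝ) / (r - k)) := by
  have hr : (0 : ℝ) < r - k := by rw [sub_pos]; exact_mod_cast hk
  rw [← Finset.sum_sdiff h1]
  have e1 : ∑ t ∈ Finset.range r \ Ω r, sieveFun k Ω r t * sieveFun k Ω r t
      = (r - k : ℕ) * ((k : ℝ) / (r - k) * ((k : ℝ) / (r - k))) := by
    rw [Finset.sum_congr rfl (g := fun _ => (k : ℝ) / (r - k) * ((k : ℝ) / (r - k)))]
    · rw [Finset.sum_const, Finset.card_sdiff_of_subset h1, h2]; simp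
    · intro t ht; simp [sieveFun, (Finset.mem_sdiff.1 ht).2]
  have e2 : ∑ t ∈ Ω r, sieveFun k Ω r t * sieveFun k Ω r t = k := by
    rw [Finset.sum_congr rfl (g := fun _ => (1 : ℝ))]
    · rw [Finset.sum_const, h2]; simp
    · intro t ht; simp [sieveFun, ht]
  rw [e1, e2, Nat.cast_sub hk.le]; field_simp; ring

lemma sieveFun_abs (k r : ℕ) (hk : k < r) (Ω : ℕ → Finset ℕ) (t : ℕ) :
    |sieveFun k Ω r t| ≤ r := by
  have hr : (1 : ℝ) ≤ r - k := by
    have : (k : ℝ) + 1 ≤ r := by exact_mod_cast hk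
    linarith
  have hr1 : (1 : ℝ) ≤ r := by exact_mod_cast (by omega : 1 ≤ r)
  unfold sieveFun
  split_ifs
  · simpa using hr1
  · rw [abs_of_nonneg (by positivity)]
    rw [div_le_iff₀ (by linarith)]
    have : (0:ℝ) ≤ k := by positivity
    nlinarith

/-- the level set of the sieve -/
noncomputable def sieveLevel (P : Finset ℕ) (z : ℕ) : Finset (Finset ℕ) :=
  P.powerset.filter (fun s => ∏ r ∈ s, r ≤ z)

noncomputable def sieveS (k : ℕ) (P : Finset ℕ) (z : ℕ) : ℝ :=
  ∑ s ∈ sieveLevel P z, ∏ r ∈ s, (k : ℝ) / (r - k)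

lemma prod_primes_inj (P : Finset ℕ) (hP : ∀ r ∈ P, r.Prime) :
    Set.InjOn (fun s : Finset ℕ => ∏ r ∈ s, r) (P.powerset : Set (Finset ℕ)) := by
  intro s hs t ht h
  have hs' : ∀ r ∈ s, r.Prime := fun r hr => hP r (Finset.mem_powerset.1 hs hr)
  have ht' : ∀ r ∈ t, r.Prime := fun r hr => hP r (Finset.mem_powerset.1 ht hr)
  rw [← Nat.primeFactors_prod hs', ← Nat.primeFactors_prod ht']
  exact congrArg _ h

lemma sieveLevel_card (P : Finset ℕ) (hP : ∀ r ∈ P, r.Prime) (z : ℕ) :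
    (sieveLevel P z).card ≤ z := by
  have : (sieveLevel P z).card ≤ (Finset.Icc 1 z).card := by
    refine Finset.card_le_card_of_injOn (fun s => ∏ r ∈ s, r) ?_ ?_
    · intro s hs
      simp only [sieveLevel, Finset.coe_filter, Set.mem_ofPred_eq, Finset.mem_powerset] at hs
      simp only [Finset.coe_Icc, Set.mem_Icc]
      exact ⟨Finset.prod_pos fun r hr => (hP r (hs.1 hr)).pos, hs.2⟩
    · refine (prod_primes_inj P hP).mono ?_
      intro s hs
      exact Finset.mem_coe.2 (Finset.mem_filter.1 (Finset.mem_coe.1 hs)).1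
  simpa using this

lemma sieve_cross (k : ℕ) (P : Finset ℕ) (hP : ∀ r ∈ P, r.Prime) (hk : ∀ r ∈ P, k < r)
    (Ω : ℕ → Finset ℕ) (h1 : ∀ r ∈ P, Ω r ⊆ Finset.range r) (h2 : ∀ r ∈ P, (Ω r).card = k)
    (z X : ℕ) (s s' : Finset ℕ) (hs : s ∈ sieveLevel P z) (hs' : s' ∈ sieveLevel P z) :
    ∑ t ∈ Finset.range X, (∏ r ∈ s, sieveFun k Ω r (t % r)) * (∏ r ∈ s', sieveFun k Ω r (t % r))
      ≤ (if s = s' then X * ∏ r ∈ s, (k : ℝ) / (r - k) else 0) + (z : ℝ) ^ 4 := by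
  classical
  simp only [sieveLevel, Finset.mem_filter, Finset.mem_powerset] at hs hs'
  obtain ⟨hsP, hsz⟩ := hs
  obtain ⟨hsP', hsz'⟩ := hs'
  have hpos : ∀ r ∈ P, (0 : ℝ) ≤ (k : ℝ) / (r - k) ∧ (k : ℝ) / (r - k) ≤ r := by
    intro r hr
    have := hk r hr
    have h3 : (k : ℝ) + 1 ≤ r := by exact_mod_cast this
    have : (0:ℝ) ≤ k := by positivity
    refine ⟨div_nonneg this (by linarith), ?_⟩
    rw [div_le_iff₀ (by linarith)]
    nlinarith
  have hzz : ∀ u ⊆ P, ∏ r ∈ u, r ≤ z → ∀ t, |∏ r ∈ u, sieveFun k Ω r (t % r)| ≤ z := by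
    intro u hu huz t
    rw [Finset.abs_prod]
    calc _ ≤ ∏ r ∈ u, (r : ℝ) := Finset.prod_le_prod (fun _ _ => abs_nonneg _)
            fun r hr => sieveFun_abs k r (hk r (hu hr)) Ω _
      _ ≤ z := by rw [← Nat.cast_prod]; exact Nat.cast_le.2 huz
  have hz1 : 1 ≤ z := le_trans (Finset.prod_pos fun r hr => (hP r (hsP hr)).pos) hsz
  have hz1' : (1 : ℝ) ≤ z := by exact_mod_cast hz1
  split_ifs with heq
  · subst heq
    have hQ : 0 < ∏ r ∈ s, r := Finset.prod_pos fun r hr => (hP r (hsP hr)).pos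
    have := periodic_sum_nonneg (∏ r ∈ s, r) hQ
      (fun t => (∏ r ∈ s, sieveFun k Ω r (t % r)) * (∏ r ∈ s, sieveFun k Ω r (t % r)))
      (∏ r ∈ s, (k : ℝ) / (r - k)) ?_ (fun t => mul_self_nonneg _) ?_ X
    · refine this.trans ?_
      rw [add_mul]
      gcongr
      have b1 : ((∏ r ∈ s, r : ℕ) : ℝ) ≤ z := by exact_mod_cast hsz
      have b2 : ∏ r ∈ s, (k : ℝ) / (r - k) ≤ z := by
        calc _ ≤ ∏ r ∈ s, (r : ℝ) := Finset.prod_le_prod (fun r hr => (hpos r (hsP hr)).1)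
                fun r hr => (hpos r (hsP hr)).2
          _ ≤ z := by rw [← Nat.cast_prod]; exact Nat.cast_le.2 hsz
      have b3 : 0 ≤ ∏ r ∈ s, (k : ℝ) / (r - k) := Finset.prod_nonneg fun r hr => (hpos r (hsP hr)).1
      calc _ ≤ (z : ℝ) * z := mul_le_mul b1 b2 b3 (by positivity)
        _ = (z : ℝ) ^ 2 := by ring
        _ ≤ _ := pow_le_pow_right₀ hz1' (by norm_num)
    · intro t
      have : ∏ r ∈ s, sieveFun k Ω r ((t + ∏ r ∈ s, r) % r) = ∏ r ∈ s, sieveFun k Ω r (t % r) := by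
        refine Finset.prod_congr rfl fun r hr => ?_
        obtain ⟨c, hc⟩ := Finset.dvd_prod_of_mem (fun r : ℕ => r) hr
        rw [hc, Nat.add_mul_mod_self_left]
      simp only [this]
    · simp only [← Finset.prod_mul_distrib]
      rw [crt_sum s (fun r hr => hP r (hsP hr)) (fun r t => sieveFun k Ω r t * sieveFun k Ω r t)]
      push_cast
      rw [← Finset.prod_mul_distrib]
      exact Finset.prod_congr rfl fun r hr => sieveFun_sum_sq k r (hk r (hsP hr)) Ω
        (h1 r (hsP hr)) (h2 r (hsP hr))
  · rw [zero_add]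
    set U := s ∪ s' with hU
    have hUP : U ⊆ P := Finset.union_subset hsP hsP'
    have hQ : 0 < ∏ r ∈ U, r := Finset.prod_pos fun r hr => (hP r (hUP hr)).pos
    let v : ℕ → ℕ → ℝ := fun r t => (if r ∈ s then sieveFun k Ω r t else 1) *
      (if r ∈ s' then sieveFun k Ω r t else 1)
    have hv : ∀ t, (∏ r ∈ s, sieveFun k Ω r (t % r)) * (∏ r ∈ s', sieveFun k Ω r (t % r))
        = ∏ r ∈ U, v r (t % r) := by
      intro t
      simp only [v, Finset.prod_mul_distrib]
      congr 1
      · rw [Finset.prod_ite_mem, hU, Finset.union_inter_cancel_left]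
      · rw [Finset.prod_ite_mem, hU, Finset.union_inter_cancel_right]
    have := periodic_sum_zero (∏ r ∈ U, r) hQ
      (fun t => (∏ r ∈ s, sieveFun k Ω r (t % r)) * (∏ r ∈ s', sieveFun k Ω r (t % r)))
      ((z : ℝ) * z) ?_ ?_ ?_ X
    · refine (le_abs_self _).trans (this.trans ?_)
      have b1 : ∏ r ∈ U, r ≤ z * z := by
        calc ∏ r ∈ U, r ≤ (∏ r ∈ U, r) * ∏ r ∈ s ∩ s', r :=
              Nat.le_mul_of_pos_right _ (Finset.prod_pos fun r hr =>
                (hP r (hsP (Finset.mem_inter.1 hr).1)).pos)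
          _ = (∏ r ∈ s, r) * ∏ r ∈ s', r := Finset.prod_union_inter
          _ ≤ z * z := Nat.mul_le_mul hsz hsz'
      have b2 : ((∏ r ∈ U, r : ℕ) : ℝ) ≤ z * z := by exact_mod_cast b1
      calc _ ≤ ((z : ℝ) * z) * (z * z) := by gcongr
        _ = _ := by ring
    · intro t
      simp only [hv]
      refine Finset.prod_congr rfl fun r hr => ?_
      obtain ⟨c, hc⟩ := Finset.dvd_prod_of_mem (fun r : ℕ => r) hr
      rw [hc, Nat.add_mul_mod_self_left]
    · intro t
      rw [abs_mul]
      exact mul_le_mul (hzz s hsP hsz t) (hzz s' hsP' hsz' t) (abs_nonneg _) (by positivity)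
    · simp only [hv]
      rw [crt_sum U (fun r hr => hP r (hUP hr)) v]
      have : ∃ r, (r ∈ s ∧ r ∉ s') ∨ (r ∉ s ∧ r ∈ s') := by
        by_contra hcon
        push Not at hcon
        exact heq (Finset.ext fun r => ⟨fun h => (hcon r).1 h, fun h => by
          by_contra h'; exact (hcon r).2 h' h⟩)
      obtain ⟨r, hr⟩ := this
      have hrU : r ∈ U := by rw [hU, Finset.mem_union]; tauto
      refine Finset.prod_eq_zero hrU ?_
      have h0 := sieveFun_sum k r (hk r (hUP hrU)) Ω (h1 r (hUP hrU)) (h2 r (hUP hrU))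
      rcases hr with hr | hr <;> simpa [v, hr.1, hr.2] using h0

theorem sieve_bound (k : ℕ) (P : Finset ℕ) (hP : ∀ r ∈ P, r.Prime) (hk : ∀ r ∈ P, k < r)
    (Ω : ℕ → Finset ℕ) (h1 : ∀ r ∈ P, Ω r ⊆ Finset.range r) (h2 : ∀ r ∈ P, (Ω r).card = k)
    (z X : ℕ) (hz : 1 ≤ z) (A : Finset ℕ) (hA : A ⊆ Finset.range X)
    (hA2 : ∀ t ∈ A, ∀ r ∈ P, t % r ∉ Ω r) :
    (A.card : ℝ) ≤ X / sieveS k P z + (z : ℝ) ^ 6 := by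
  set S := sieveS k P z with hS
  have hpos : ∀ r ∈ P, (0 : ℝ) ≤ (k : ℝ) / (r - k) := by
    intro r hr
    have h3 : (k : ℝ) + 1 ≤ r := by exact_mod_cast hk r hr
    exact div_nonneg (by positivity) (by linarith)
  have hS1 : 1 ≤ S := by
    have : (∅ : Finset ℕ) ∈ sieveLevel P z := by simp [sieveLevel, hz]
    have := Finset.single_le_sum (f := fun s : Finset ℕ => ∏ r ∈ s, (k : ℝ) / (r - k)) (fun s hs =>
      Finset.prod_nonneg fun r hr => hpos r (by
        simp only [sieveLevel, Finset.mem_filter, Finset.mem_powerset] at hs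
        exact hs.1 hr)) this
    rw [Finset.prod_empty] at this
    exact this
  let f : ℕ → ℝ := fun t => ∑ s ∈ sieveLevel P z, ∏ r ∈ s, sieveFun k Ω r (t % r)
  have hfA : ∀ t ∈ A, f t = S := by
    intro t ht
    refine Finset.sum_congr rfl fun s hs => Finset.prod_congr rfl fun r hr => ?_
    simp only [sieveLevel, Finset.mem_filter, Finset.mem_powerset] at hs
    simp [sieveFun, hA2 t ht r (hs.1 hr)]
  have e1 : (A.card : ℝ) * (S * S) ≤ ∑ t ∈ Finset.range X, f t * f t := by
    calc (A.card : ℝ) * (S * S) = ∑ t ∈ A, f t * f t := by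
          rw [Finset.sum_congr rfl (g := fun _ => S * S) (fun t ht => by rw [hfA t ht])]; simp
      _ ≤ _ := Finset.sum_le_sum_of_subset_of_nonneg hA fun t _ _ => mul_self_nonneg _
  have e2 : ∑ t ∈ Finset.range X, f t * f t ≤ X * S + (z : ℝ) ^ 6 := by
    calc ∑ t ∈ Finset.range X, f t * f t
        = ∑ s ∈ sieveLevel P z, ∑ s' ∈ sieveLevel P z, ∑ t ∈ Finset.range X,
          (∏ r ∈ s, sieveFun k Ω r (t % r)) * (∏ r ∈ s', sieveFun k Ω r (t % r)) := by
            simp only [f, Finset.sum_mul_sum]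
            rw [Finset.sum_comm]
            refine Finset.sum_congr rfl fun s _ => ?_
            rw [Finset.sum_comm]
      _ ≤ ∑ s ∈ sieveLevel P z, ∑ s' ∈ sieveLevel P z,
          ((if s = s' then X * ∏ r ∈ s, (k : ℝ) / (r - k) else 0) + (z : ℝ) ^ 4) :=
            Finset.sum_le_sum fun s hs => Finset.sum_le_sum fun s' hs' =>
              sieve_cross k P hP hk Ω h1 h2 z X s s' hs hs'
      _ = X * S + ((sieveLevel P z).card : ℝ) * ((sieveLevel P z).card * (z : ℝ) ^ 4) := by
            simp only [Finset.sum_add_distrib, Finset.sum_ite_eq, Finset.sum_const, nsmul_eq_mul]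
            congr 1
            rw [hS, sieveS, Finset.mul_sum]
            exact Finset.sum_congr rfl fun s hs => by simp [hs]
      _ ≤ X * S + (z : ℝ) * (z * (z : ℝ) ^ 4) := by
            have : ((sieveLevel P z).card : ℝ) ≤ z := by exact_mod_cast sieveLevel_card P hP z
            gcongr
      _ = _ := by ring
  have e3 := e1.trans e2
  have hS0 : 0 < S := by linarith
  have hz6 : (0:ℝ) ≤ (z:ℝ)^6 := by positivity
  have e4 : (A.card : ℝ) * (S * S) ≤ (X / S + (z : ℝ) ^ 6) * (S * S) := by
    have : (X / S + (z : ℝ) ^ 6) * (S * S) = X * S + z ^ 6 * (S * S) := by field_simp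
    rw [this]
    have : (1:ℝ) ≤ S * S := by nlinarith
    nlinarith
  exact le_of_mul_le_mul_right e4 (by positivity)


lemma sieveS_eq (k : ℕ) (P : Finset ℕ) (z : ℕ) : sieveS k P z =
    ∑ s ∈ P.powerset, if ∏ r ∈ s, r ≤ z then ∏ r ∈ s, (k : ℝ) / (r - k) else 0 := by
  rw [sieveS, sieveLevel, Finset.sum_filter]

lemma sieveS_mono (k : ℕ) (P : Finset ℕ) (hk : ∀ r ∈ P, k < r) {z w : ℕ} (h : z ≤ w) :
    sieveS k P z ≤ sieveS k P w := by
  refine Finset.sum_le_sum_of_subset_of_nonneg ?_ ?_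
  · intro s hs
    simp only [sieveLevel, Finset.mem_filter] at hs ⊢
    exact ⟨hs.1, hs.2.trans h⟩
  · intro s hs _
    simp only [sieveLevel, Finset.mem_filter, Finset.mem_powerset] at hs
    refine Finset.prod_nonneg fun r hr => ?_
    have h3 : (k : ℝ) + 1 ≤ r := by exact_mod_cast hk r (hs.1 hr)
    exact div_nonneg (by positivity) (by linarith)

lemma sieveS_insert (k : ℕ) (P : Finset ℕ) (p : ℕ) (hp : p ∉ P) (hp0 : 0 < p) (z : ℕ) :
    sieveS k (insert p P) z = sieveS k P z + (k : ℝ) / (p - k) * sieveS k P (z / p) := by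
  simp only [sieveS_eq]
  rw [Finset.sum_powerset_insert hp, Finset.mul_sum]
  congr 1
  refine Finset.sum_congr rfl fun s hs => ?_
  have hps : p ∉ s := fun h => hp (Finset.mem_powerset.1 hs h)
  rw [Finset.prod_insert hps, Finset.prod_insert hps]
  have : p * ∏ r ∈ s, r ≤ z ↔ ∏ r ∈ s, r ≤ z / p := by
    rw [Nat.le_div_iff_mul_le hp0, mul_comm]
  simp only [this]
  split_ifs <;> simp

/-- the completely multiplicative weight -/
noncomputable def sieveC (k m : ℕ) : ℝ := (k : ℝ) ^ (ArithmeticFunction.cardFactors m) / m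

noncomputable def sieveG (k : ℕ) (P : Finset ℕ) (z : ℕ) : ℝ :=
  ∑ m ∈ (Finset.Icc 1 z).filter (fun m => m.primeFactors ⊆ P), sieveC k m

lemma sieveG_insert (k : ℕ) (P : Finset ℕ) (hP : ∀ r ∈ P, r.Prime) (p : ℕ) (hp : p ∉ P)
    (hpp : p.Prime) (z : ℕ) :
    sieveG k (insert p P) z = sieveG k P z + (k : ℝ) / p * sieveG k (insert p P) (z / p) := by
  rw [sieveG, ← Finset.sum_filter_not_add_sum_filter _ (fun m => p ∣ m)]
  congr 1
  · refine Finset.sum_congr ?_ fun _ _ => rfl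
    ext m
    simp only [Finset.mem_filter, Finset.mem_Icc]
    constructor
    · rintro ⟨⟨h1, h2⟩, h3⟩
      refine ⟨h1, fun r hr => ?_⟩
      rcases Finset.mem_insert.1 (h2 hr) with rfl | h
      · exact absurd (Nat.dvd_of_mem_primeFactors hr) h3
      · exact h
    · rintro ⟨h1, h2⟩
      refine ⟨⟨h1, h2.trans (Finset.subset_insert _ _)⟩, fun h => hp (h2 ?_)⟩
      exact Nat.mem_primeFactors.2 ⟨hpp, h, by omega⟩
  · rw [sieveG, Finset.mul_sum]
    refine Finset.sum_bij' (fun m _ => m / p) (fun m _ => p * m) ?_ ?_ ?_ ?_ ?_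
    · intro m hm
      simp only [Finset.mem_filter, Finset.mem_Icc] at hm ⊢
      obtain ⟨⟨⟨h1, h2⟩, h3⟩, c, rfl⟩ := hm
      rw [Nat.mul_div_cancel_left _ hpp.pos]
      have hc : c ≠ 0 := by rintro rfl; simp at h1
      refine ⟨⟨by omega, ?_⟩, ?_⟩
      · rw [Nat.le_div_iff_mul_le hpp.pos, mul_comm]; exact h2
      · exact (Nat.primeFactors_mono (Dvd.intro_left p rfl) (by omega)).trans h3
    · intro m hm
      simp only [Finset.mem_filter, Finset.mem_Icc] at hm ⊢
      obtain ⟨⟨h1, h2⟩, h3⟩ := hm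
      rw [Nat.le_div_iff_mul_le hpp.pos, mul_comm] at h2
      refine ⟨⟨⟨Nat.mul_pos hpp.pos h1, h2⟩, ?_⟩, Dvd.intro _ rfl⟩
      rw [Nat.primeFactors_mul hpp.ne_zero (by omega), hpp.primeFactors]
      exact Finset.union_subset (by simp) h3
    · intro m hm
      simp only [Finset.mem_filter] at hm
      exact Nat.mul_div_cancel' hm.2
    · intro m hm
      exact Nat.mul_div_cancel_left _ hpp.pos
    · intro m hm
      simp only [Finset.mem_filter, Finset.mem_Icc] at hm
      obtain ⟨⟨⟨h1, h2⟩, h3⟩, c, rfl⟩ := hm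
      have hc : c ≠ 0 := by rintro rfl; simp at h1
      rw [Nat.mul_div_cancel_left _ hpp.pos, sieveC, sieveC,
        ArithmeticFunction.cardFactors_mul hpp.ne_zero hc,
        ArithmeticFunction.cardFactors_apply_prime hpp]
      push_cast
      rw [pow_add, pow_one, mul_div_mul_comm]

lemma sieveG_le_sieveS (k : ℕ) (P : Finset ℕ) (hP : ∀ r ∈ P, r.Prime) (hk : ∀ r ∈ P, k < r)
    (z : ℕ) : sieveG k P z ≤ sieveS k P z := by
  classical
  induction P using Finset.induction_on generalizing z with
  | empty =>
    rcases Nat.eq_zero_or_pos z with rfl | hz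
    · rw [sieveS_eq]; simp [sieveG]
    · have : (Finset.Icc 1 z).filter (fun m => m.primeFactors ⊆ ∅) = {1} := by
        ext m
        simp only [Finset.mem_filter, Finset.mem_Icc, Finset.subset_empty,
          Nat.primeFactors_eq_empty, Finset.mem_singleton]
        omega
      rw [sieveG, this, sieveS_eq]
      have h1 : 1 ≤ z := hz
      simp [sieveC, h1]
  | insert p P hp ih =>
    have hP' : ∀ r ∈ P, r.Prime := fun r hr => hP r (Finset.mem_insert_of_mem hr)
    have hk' : ∀ r ∈ P, k < r := fun r hr => hk r (Finset.mem_insert_of_mem hr)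
    have hpp : p.Prime := hP p (Finset.mem_insert_self _ _)
    have hkp : k < p := hk p (Finset.mem_insert_self _ _)
    induction z using Nat.strong_induction_on with
    | _ z ihz =>
      rcases Nat.eq_zero_or_pos z with rfl | hz
      · simp only [sieveG, sieveS, sieveLevel]
        rw [show Finset.Icc 1 0 = ∅ by simp, Finset.filter_empty, Finset.sum_empty]
        rw [Finset.filter_false_of_mem, Finset.sum_empty]
        intro s hs
        have : 0 < ∏ r ∈ s, r := Finset.prod_pos fun r hr => (hP r (Finset.mem_powerset.1 hs hr)).pos
        omega
      · rw [sieveG_insert k P hP' p hp hpp]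
        have i1 := ih hP' hk' z
        have i2 := ihz (z / p) (Nat.div_lt_self hz hpp.one_lt)
        have i3 := sieveS_insert k P p hp hpp.pos (z / p)
        have i4 := sieveS_mono k P hk' (Nat.div_le_self (z / p) p)
        rw [sieveS_insert k P p hp hpp.pos z]
        have h3 : (k : ℝ) < p := by exact_mod_cast hkp
        have hp0 : (0 : ℝ) < p := by exact_mod_cast hpp.pos
        have hk0 : (0 : ℝ) ≤ k := by positivity
        have hd : (0 : ℝ) < p - k := by linarith
        have hkd : (0 : ℝ) ≤ (k : ℝ) / (p - k) := by positivity
        have i5 : sieveG k (insert p P) (z / p) ≤ (p : ℝ) / (p - k) * sieveS k P (z / p) := by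
          have : (p : ℝ) / (p - k) = 1 + k / (p - k) := by field_simp; ring
          rw [this]
          nlinarith [mul_le_mul_of_nonneg_left i4 hkd]
        have i6 : (k : ℝ) / p * sieveG k (insert p P) (z / p)
            ≤ (k : ℝ) / (p - k) * sieveS k P (z / p) := by
          calc _ ≤ (k : ℝ) / p * ((p : ℝ) / (p - k) * sieveS k P (z / p)) := by gcongr
            _ = _ := by field_simp
        linarith

noncomputable def harmCop (U : Finset ℕ) (y : ℕ) : ℝ :=
  ∑ m ∈ (Finset.Icc 1 y).filter (fun m => ∀ r ∈ U, ¬ r ∣ m), (1 : ℝ) / m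

lemma harmCop_mono (U : Finset ℕ) {y w : ℕ} (h : y ≤ w) : harmCop U y ≤ harmCop U w := by
  refine Finset.sum_le_sum_of_subset_of_nonneg ?_ fun _ _ _ => by positivity
  exact Finset.filter_subset_filter _ (Finset.Icc_subset_Icc le_rfl h)

lemma harmCop_lower (U : Finset ℕ) (hU : ∀ r ∈ U, r.Prime) (y : ℕ) :
    (∏ r ∈ U, (1 - (1 : ℝ) / r)) * Real.log (y + 1) ≤ harmCop U y := by
  classical
  induction U using Finset.induction_on with
  | empty =>
    have := log_add_one_le_harmonic y
    rw [harmonic_eq_sum_Icc] at this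
    push_cast at this
    simpa [harmCop] using this
  | insert p U hp ih =>
    have ih' := ih fun r hr => hU r (Finset.mem_insert_of_mem hr)
    have hpp := hU p (Finset.mem_insert_self _ _)
    have hp0 : (1 : ℝ) < p := by exact_mod_cast hpp.one_lt
    have key : harmCop U y ≤ harmCop (insert p U) y + (1 : ℝ) / p * harmCop U (y / p) := by
      rw [harmCop, ← Finset.sum_filter_not_add_sum_filter _ (fun m => p ∣ m)]
      refine add_le_add (le_of_eq ?_) ?_
      · refine Finset.sum_congr ?_ fun _ _ => rfl
        ext m
        simp only [Finset.mem_filter, Finset.mem_insert, forall_eq_or_imp]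
        tauto
      · have : ∀ m ∈ ((Finset.Icc 1 y).filter (fun m => ∀ r ∈ U, ¬ r ∣ m)).filter (fun m => p ∣ m),
            (1 : ℝ) / m = 1 / p * (1 / ((m / p : ℕ) : ℝ)) := by
          intro m hm
          simp only [Finset.mem_filter, Finset.mem_Icc] at hm
          obtain ⟨_, c, rfl⟩ := hm
          rw [Nat.mul_div_cancel_left _ hpp.pos]
          push_cast
          rw [div_mul_div_comm, one_mul]
        rw [Finset.sum_congr rfl this, ← Finset.mul_sum]
        refine mul_le_mul_of_nonneg_left ?_ (by positivity)
        rw [harmCop]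
        rw [← Finset.sum_image (f := fun m : ℕ => (1 : ℝ) / m) (g := fun m => m / p)]
        · refine Finset.sum_le_sum_of_subset_of_nonneg ?_ fun _ _ _ => by positivity
          intro m' hm'
          simp only [Finset.mem_image, Finset.mem_filter, Finset.mem_Icc] at hm' ⊢
          obtain ⟨m, ⟨⟨⟨h1, h2⟩, h3⟩, c, rfl⟩, rfl⟩ := hm'
          rw [Nat.mul_div_cancel_left _ hpp.pos]
          have hc : c ≠ 0 := by rintro rfl; simp at h1
          refine ⟨⟨by omega, ?_⟩, fun r hr h => h3 r hr (h.mul_left _)⟩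
          rw [Nat.le_div_iff_mul_le hpp.pos, mul_comm]; exact h2
        · intro a ha b hb hab
          simp only [Finset.coe_filter, Set.mem_ofPred_eq, Finset.mem_filter] at ha hb
          exact (Nat.div_left_inj ha.2 hb.2).1 hab
    have h2 := harmCop_mono U (Nat.div_le_self y p)
    have hnn : (0:ℝ) ≤ 1 / p := by positivity
    have hle : (1:ℝ) / p ≤ 1 := by rw [div_le_one (by linarith)]; linarith
    rw [Finset.prod_insert hp, mul_assoc]
    calc _ ≤ (1 - (1 : ℝ) / p) * harmCop U y := by
          apply mul_le_mul_of_nonneg_left ih'; linarith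
      _ ≤ _ := by nlinarith [mul_le_mul_of_nonneg_left h2 hnn]

lemma totient_div (B : ℕ) (hB : B ≠ 0) :
    (B.totient : ℝ) / B = ∏ r ∈ B.primeFactors, (1 - (1 : ℝ) / r) := by
  have := Nat.totient_eq_mul_prod_factors B
  have h2 : ((B.totient : ℚ) : ℝ) = ((B * ∏ p ∈ B.primeFactors, (1 - (p : ℚ)⁻¹) : ℚ) : ℝ) := by
    rw [this]
  push_cast at h2
  have hB' : (B : ℝ) ≠ 0 := by exact_mod_cast hB
  rw [h2]
  field_simp

/-- primes up to z not dividing B -/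
noncomputable def sievePrimes (B z : ℕ) : Finset ℕ :=
  (Finset.Icc 1 z).filter (fun r => r.Prime ∧ ¬ r ∣ B)

lemma primeFactors_subset_sievePrimes (B z m : ℕ) (hB : B ≠ 0) (hm : 1 ≤ m) (hmz : m ≤ z)
    (h : ∀ r ∈ B.primeFactors, ¬ r ∣ m) : m.primeFactors ⊆ sievePrimes B z := by
  intro r hr
  have hrp := Nat.prime_of_mem_primeFactors hr
  have hrd := Nat.dvd_of_mem_primeFactors hr
  simp only [sievePrimes, Finset.mem_filter, Finset.mem_Icc]
  refine ⟨⟨hrp.pos, (Nat.le_of_dvd hm hrd).trans hmz⟩, hrp, fun hh => ?_⟩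
  exact h r (Nat.mem_primeFactors.2 ⟨hrp, hh, hB⟩) hrd

lemma sieveS_one_lower (B z : ℕ) (hB : B ≠ 0) :
    (B.totient : ℝ) / B * Real.log (z + 1) ≤ sieveS 1 (sievePrimes B z) z := by
  rw [totient_div B hB]
  refine (harmCop_lower _ (fun r hr => Nat.prime_of_mem_primeFactors hr) z).trans ?_
  refine le_trans ?_ (sieveG_le_sieveS 1 _ (fun r hr => (Finset.mem_filter.1 hr).2.1)
    (fun r hr => (Finset.mem_filter.1 hr).2.1.one_lt) z)
  rw [harmCop, sieveG]
  simp only [sieveC, Nat.cast_one, one_pow]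
  refine Finset.sum_le_sum_of_subset_of_nonneg ?_ fun _ _ _ => by positivity
  intro m hm
  simp only [Finset.mem_filter, Finset.mem_Icc] at hm ⊢
  exact ⟨hm.1, primeFactors_subset_sievePrimes B z m hB hm.1.1 hm.1.2 hm.2⟩

lemma card_divisors_le (m : ℕ) (hm : m ≠ 0) :
    m.divisors.card ≤ 2 ^ (ArithmeticFunction.cardFactors m) := by
  induction m using Nat.recOnMul with
  | zero => exact absurd rfl hm
  | one => simp
  | prime p hp =>
    rw [ArithmeticFunction.cardFactors_apply_prime hp, hp.divisors]
    exact Finset.card_le_two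
  | mul a b iha ihb =>
    have ha : a ≠ 0 := left_ne_zero_of_mul hm
    have hb : b ≠ 0 := right_ne_zero_of_mul hm
    rw [ArithmeticFunction.cardFactors_mul ha hb, pow_add, Nat.divisors_mul]
    exact Finset.card_mul_le.trans (Nat.mul_le_mul (iha ha) (ihb hb))

lemma sieveS_two_lower (B y : ℕ) (hB : B ≠ 0) (h2 : 2 ∣ B) :
    ((B.totient : ℝ) / B * Real.log (y + 1)) ^ 2 ≤ sieveS 2 (sievePrimes B (y ^ 2)) (y ^ 2) := by
  rw [totient_div B hB]
  have h0 := harmCop_lower _ (fun r hr => Nat.prime_of_mem_primeFactors (n := B) hr) y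
  have hnn : 0 ≤ (∏ r ∈ B.primeFactors, (1 - (1 : ℝ) / r)) * Real.log (y + 1) := by
    rw [← totient_div B hB]
    have : 0 ≤ Real.log ((y : ℝ) + 1) := Real.log_nonneg (by linarith [Nat.cast_nonneg (α := ℝ) y])
    positivity
  refine (pow_le_pow_left₀ hnn h0 2).trans ?_
  refine le_trans ?_ (sieveG_le_sieveS 2 _ (fun r hr => (Finset.mem_filter.1 hr).2.1)
    (fun r hr => ?_) (y ^ 2))
  swap
  · have := (Finset.mem_filter.1 hr).2
    refine lt_of_le_of_ne this.1.two_le ?_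
    rintro rfl; exact this.2 h2
  rw [harmCop, sieveG, sq, Finset.sum_mul_sum, ← Finset.sum_product']
  set A := (Finset.Icc 1 y).filter (fun m => ∀ r ∈ B.primeFactors, ¬ r ∣ m) with hA
  rw [← Finset.sum_fiberwise_of_maps_to (g := fun p : ℕ × ℕ => p.1 * p.2)
    (t := (Finset.Icc 1 (y ^ 2)).filter (fun m => m.primeFactors ⊆ sievePrimes B (y ^ 2)))]
  · refine Finset.sum_le_sum fun m hm => ?_
    have hm1 : 1 ≤ m := (Finset.mem_Icc.1 (Finset.mem_filter.1 hm).1).1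
    have : ∀ p ∈ (A ×ˢ A).filter (fun p : ℕ × ℕ => p.1 * p.2 = m),
        (1 : ℝ) / p.1 * (1 / p.2) = 1 / m := by
      intro p hp
      rw [← (Finset.mem_filter.1 hp).2]; push_cast; rw [div_mul_div_comm, one_mul]
    rw [Finset.sum_congr rfl this, Finset.sum_const, nsmul_eq_mul, sieveC, mul_one_div]
    gcongr
    have c1 : ((A ×ˢ A).filter (fun p : ℕ × ℕ => p.1 * p.2 = m)).card
        ≤ m.divisorsAntidiagonal.card := by
      refine Finset.card_le_card fun p hp => ?_
      rw [Nat.mem_divisorsAntidiagonal]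
      exact ⟨(Finset.mem_filter.1 hp).2, by omega⟩
    rw [← Nat.map_div_right_divisors, Finset.card_map] at c1
    exact_mod_cast c1.trans (card_divisors_le m (by omega))
  · intro p hp
    simp only [hA, Finset.mem_product, Finset.mem_filter, Finset.mem_Icc] at hp ⊢
    have l1 : 1 ≤ p.1 * p.2 := Nat.mul_pos hp.1.1.1 hp.2.1.1
    have l2 : p.1 * p.2 ≤ y ^ 2 := by
      rw [sq]; exact Nat.mul_le_mul hp.1.1.2 hp.2.1.2
    refine ⟨⟨l1, l2⟩, primeFactors_subset_sievePrimes B _ _ hB l1 l2 fun r hr h => ?_⟩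
    rcases (Nat.prime_of_mem_primeFactors hr).dvd_mul.1 h with h | h
    · exact hp.1.2 r hr h
    · exact hp.2.2 r hr h


lemma exists_root (e Y : ℕ) (he : 1 ≤ e) (hY : 1 ≤ Y) : ∃ z, 1 ≤ z ∧ z ^ e ≤ Y ∧ Y < (z + 1) ^ e := by
  classical
  have hex : ∃ w, Y < (w + 1) ^ e := ⟨Y, lt_of_lt_of_le (Nat.lt_succ_self Y) (Nat.le_self_pow (by omega) _)⟩
  have h1 := Nat.find_spec hex
  have h0 : Nat.find hex ≠ 0 := by
    intro h; rw [h] at h1; simp at h1; omega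
  refine ⟨Nat.find hex, by omega, ?_, h1⟩
  have := Nat.find_min hex (m := Nat.find hex - 1) (by omega)
  rw [Nat.sub_add_cancel (by omega)] at this
  omega

lemma root_set (r q a : ℕ) (hr : r.Prime) (hq : ¬ r ∣ q) :
    ∃ t0, (Finset.range r).filter (fun t => r ∣ a + q * t) = {t0} := by
  haveI := Fact.mk hr
  have hq0 : (q : ZMod r) ≠ 0 := by rwa [Ne, ZMod.natCast_eq_zero_iff]
  refine ⟨(-(a : ZMod r) / q).val, ?_⟩
  ext t
  simp only [Finset.mem_filter, Finset.mem_range, Finset.mem_singleton]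
  rw [← ZMod.natCast_eq_zero_iff]
  push_cast
  constructor
  · rintro ⟨h1, h2⟩
    have : (t : ZMod r) = -(a : ZMod r) / q := by
      field_simp
      linear_combination h2
    rw [← this, ZMod.val_natCast, Nat.mod_eq_of_lt h1]
  · rintro rfl
    refine ⟨ZMod.val_lt _, ?_⟩
    rw [ZMod.natCast_val, ZMod.cast_id]
    field_simp
    ring

lemma dvd_mod_iff (r q a t : ℕ) : r ∣ a + q * (t % r) ↔ r ∣ a + q * t := by
  have : a + q * (t % r) ≡ a + q * t [MOD r] :=
    Nat.ModEq.add_left _ (Nat.ModEq.mul_left _ (Nat.mod_modEq t r))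
  exact this.dvd_iff dvd_rfl

lemma log_succ_le (e z Y : ℕ) (hz : 1 ≤ z) (he : 1 ≤ e) (hY : Y < (z + 1) ^ e) :
    Real.log ((Y : ℝ) + 1) ≤ e * Real.log ((z : ℝ) + 1) := by
  rw [← Real.log_pow]
  apply Real.log_le_log (by positivity)
  exact_mod_cast hY

/-- Brun-Titchmarsh (weak form) -/
theorem brun_titchmarsh (q a Y : ℕ) (hq : 1 ≤ q) (hY : 1 ≤ Y) :
    (((Finset.range Y).filter (fun t => (a + q * t).Prime)).card : ℝ)
      ≤ 32 * (q / q.totient) * (Y / Real.log (Y + 1)) := by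
  classical
  obtain ⟨z, hz, hz1, hz2⟩ := exists_root 8 Y (by norm_num) hY
  set A := (Finset.range Y).filter (fun t => (a + q * t).Prime ∧ z < a + q * t) with hA
  have hsplit : ((Finset.range Y).filter (fun t => (a + q * t).Prime)).card ≤ A.card + (z + 1) := by
    calc _ ≤ (A ∪ Finset.range (z + 1)).card := by
          refine Finset.card_le_card fun t ht => ?_
          simp only [hA, Finset.mem_union, Finset.mem_filter, Finset.mem_range] at ht ⊢
          by_cases h : z < a + q * t
          · exact Or.inl ⟨ht.1, ht.2, h⟩
          · right
            have : t ≤ q * t := Nat.le_mul_of_pos_left _ hq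
            omega
      _ ≤ _ := by simpa using Finset.card_union_le A (Finset.range (z + 1))
  have hsieve := sieve_bound 1 (sievePrimes q z) (fun r hr => (Finset.mem_filter.1 hr).2.1)
    (fun r hr => (Finset.mem_filter.1 hr).2.1.one_lt)
    (fun r => (Finset.range r).filter (fun t => r ∣ a + q * t))
    (fun r _ => Finset.filter_subset _ _)
    (fun r hr => by
      obtain ⟨t0, ht0⟩ := root_set r q a (Finset.mem_filter.1 hr).2.1 (Finset.mem_filter.1 hr).2.2
      simp only [ht0, Finset.card_singleton]) z Y hz A (Finset.filter_subset _ _) (by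
      intro t ht r hr h
      simp only [Finset.mem_filter, dvd_mod_iff, hA] at h ht
      simp only [sievePrimes, Finset.mem_filter, Finset.mem_Icc] at hr
      have := (Nat.prime_dvd_prime_iff_eq hr.2.1 ht.2.1).1 h.2
      omega)
  have hS := sieveS_one_lower q z (by omega)
  have htp : 0 < q.totient := Nat.totient_pos.2 hq
  have htq : q.totient ≤ q := Nat.totient_le q
  have htp' : (0 : ℝ) < q.totient := by exact_mod_cast htp
  have htq' : (q.totient : ℝ) ≤ q := by exact_mod_cast htq
  have hq' : (0 : ℝ) < q := by linarith
  have hz' : (1 : ℝ) ≤ z := by exact_mod_cast hz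
  have hY' : (1 : ℝ) ≤ Y := by exact_mod_cast hY
  set L := Real.log ((z : ℝ) + 1) with hL
  set LY := Real.log ((Y : ℝ) + 1) with hLY
  have hL0 : 0 < L := Real.log_pos (by linarith)
  have hLY0 : 0 < LY := Real.log_pos (by linarith)
  have hLL : LY ≤ 8 * L := by
    have := log_succ_le 8 z Y hz (by norm_num) hz2
    push_cast at this; exact this
  have hLz : L ≤ z := by
    have := Real.log_le_sub_one_of_pos (show (0 : ℝ) < z + 1 by linarith)
    linarith
  have h1q : 1 ≤ (q : ℝ) / q.totient := by rw [le_div_iff₀ htp']; linarith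
  have hz1' : (z : ℝ) ^ 8 ≤ Y := by exact_mod_cast hz1
  -- main term
  have m1 : (Y : ℝ) / sieveS 1 (sievePrimes q z) z ≤ 8 * (q / q.totient) * (Y / LY) := by
    calc (Y : ℝ) / sieveS 1 (sievePrimes q z) z ≤ Y / ((q.totient : ℝ) / q * L) := by
          apply div_le_div_of_nonneg_left (by linarith) (by positivity) hS
      _ = (q / q.totient) * (Y / L) := by field_simp
      _ ≤ (q / q.totient) * (8 * (Y / LY)) := by
          apply mul_le_mul_of_nonneg_left _ (by positivity)
          rw [div_le_iff₀ hL0, mul_comm, ← mul_assoc, mul_div_assoc', le_div_iff₀ hLY0]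
          nlinarith
      _ = _ := by ring
  have m2 : (z : ℝ) ^ 6 ≤ 8 * (Y / LY) := by
    rw [mul_div_assoc', le_div_iff₀ hLY0]
    have a1 : (z : ℝ) ^ 6 * LY ≤ z ^ 6 * (8 * z) := by
      apply mul_le_mul_of_nonneg_left _ (by positivity); linarith
    have a2 : (z : ℝ) ^ 7 ≤ z ^ 8 := pow_le_pow_right₀ hz' (by norm_num)
    nlinarith
  have m3 : (z : ℝ) + 1 ≤ 2 * z ^ 6 := by
    have := le_self_pow₀ hz' (show 6 ≠ 0 by norm_num)
    linarith
  have m4 : 8 * (Y / LY) ≤ 8 * (q / q.totient) * (Y / LY) := by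
    have : 0 ≤ Y / LY := by positivity
    nlinarith
  have hsplit' : (((Finset.range Y).filter (fun t => (a + q * t).Prime)).card : ℝ)
      ≤ A.card + (z + 1) := by exact_mod_cast hsplit
  calc _ ≤ (A.card : ℝ) + (z + 1) := hsplit'
    _ ≤ 8 * (q / q.totient) * (Y / LY) + 8 * (q / q.totient) * (Y / LY)
        + 2 * (8 * (q / q.totient) * (Y / LY)) := by linarith
    _ = _ := by ring

lemma twin_analysis (y X : ℕ) (hy : 1 ≤ y) (hX : 1 ≤ X) (hy1 : y ^ 16 ≤ X)
    (hy2 : X < (y + 1) ^ 16) (τ S a c : ℝ) (hτ : 0 < τ)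
    (hS : (τ * Real.log ((y : ℝ) + 1)) ^ 2 ≤ S) (hc : c ≤ a + ((y : ℝ) ^ 2 + 1))
    (ha : a ≤ X / S + ((y : ℝ) ^ 2) ^ 6) :
    c ≤ (256 / τ ^ 2 + 768) * (X / (Real.log (X + 1)) ^ 2) := by
  have hy' : (1 : ℝ) ≤ y := by exact_mod_cast hy
  have hX' : (1 : ℝ) ≤ X := by exact_mod_cast hX
  have hLL0 := log_succ_le 16 y X hy (by norm_num) hy2
  set L := Real.log ((y : ℝ) + 1) with hL
  set LX := Real.log ((X : ℝ) + 1) with hLX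
  have hL0 : 0 < L := Real.log_pos (by linarith)
  have hLX0 : 0 < LX := Real.log_pos (by linarith)
  have hLL : LX ≤ 16 * L := by
    push_cast at hLL0; exact hLL0
  have hLL2 : LX ^ 2 ≤ 256 * L ^ 2 := by
    calc LX ^ 2 ≤ (16 * L) ^ 2 := pow_le_pow_left₀ hLX0.le hLL 2
      _ = _ := by ring
  have hLy : L ≤ y := by
    have := Real.log_le_sub_one_of_pos (show (0 : ℝ) < y + 1 by linarith)
    linarith
  have hLy2 : L ^ 2 ≤ (y : ℝ) ^ 2 := pow_le_pow_left₀ hL0.le hLy 2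
  have hy1' : (y : ℝ) ^ 16 ≤ X := by exact_mod_cast hy1
  clear_value L LX
  have m1 : (X : ℝ) / S ≤ 256 / τ ^ 2 * (X / LX ^ 2) := by
    calc (X : ℝ) / S ≤ X / (τ * L) ^ 2 := by
          apply div_le_div_of_nonneg_left (by linarith) (by positivity) hS
      _ ≤ _ := by
          rw [div_mul_div_comm, div_le_div_iff₀ (by positivity) (by positivity)]
          have : 0 ≤ (X : ℝ) * τ ^ 2 := by positivity
          have := mul_le_mul_of_nonneg_left hLL2 this
          linarith
  have m2 : (y : ℝ) ^ 12 ≤ 256 * (X / LX ^ 2) := by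
    rw [mul_div_assoc', le_div_iff₀ (by positivity)]
    have a1 : (y : ℝ) ^ 12 * LX ^ 2 ≤ y ^ 12 * (256 * y ^ 2) := by
      apply mul_le_mul_of_nonneg_left _ (by positivity); linarith
    have a2 : (y : ℝ) ^ 14 ≤ y ^ 16 := pow_le_pow_right₀ hy' (by norm_num)
    have a3 : (y : ℝ) ^ 12 * (256 * y ^ 2) = 256 * y ^ 14 := by ring
    linarith
  have m3 : (y : ℝ) ^ 2 + 1 ≤ 2 * y ^ 12 := by
    have h1 : (y : ℝ) ^ 2 ≤ y ^ 12 := pow_le_pow_right₀ hy' (by norm_num)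
    have h2 : 1 ≤ (y : ℝ) ^ 12 := one_le_pow₀ hy'
    linarith
  have m4 : ((y : ℝ) ^ 2) ^ 6 = y ^ 12 := by ring
  rw [m4] at ha
  calc _ ≤ 256 / τ ^ 2 * (X / LX ^ 2) + 3 * (256 * (X / LX ^ 2)) := by linarith
    _ = _ := by ring

theorem twin_bound_pair (e1 e2 : ℕ) (he1 : 1 ≤ e1) (he : e1 < e2) : ∃ C : ℝ, 0 ≤ C ∧ ∀ X : ℕ, 1 ≤ X →
    (((Finset.range X).filter (fun t => (1 + e1 * t).Prime ∧ (1 + e2 * t).Prime)).card : ℝ)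
      ≤ C * (X / (Real.log (X + 1)) ^ 2) := by
  classical
  set B := 2 * (e1 * e2 * (e2 - e1)) with hB
  have hB0 : B ≠ 0 := by
    have : e2 - e1 ≠ 0 := by omega
    have : e2 ≠ 0 := by omega
    have : e1 ≠ 0 := by omega
    positivity
  have hτ : (0 : ℝ) < (B.totient : ℝ) / B := by
    have := Nat.totient_pos.2 (Nat.pos_of_ne_zero hB0)
    positivity
  set τ := (B.totient : ℝ) / B with hτd
  refine ⟨256 / τ ^ 2 + 768, by positivity, fun X hX => ?_⟩
  obtain ⟨y, hy, hy1, hy2⟩ := exists_root 16 X (by norm_num) hX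
  set z := y ^ 2 with hz
  have hz1 : 1 ≤ z := Nat.one_le_pow _ _ hy
  set A := (Finset.range X).filter (fun t => ((1 + e1 * t).Prime ∧ (1 + e2 * t).Prime) ∧ z < t)
    with hA
  have hsplit : ((Finset.range X).filter (fun t => (1 + e1 * t).Prime ∧ (1 + e2 * t).Prime)).card
      ≤ A.card + (z + 1) := by
    calc _ ≤ (A ∪ Finset.range (z + 1)).card := by
          refine Finset.card_le_card fun t ht => ?_
          simp only [hA, Finset.mem_union, Finset.mem_filter, Finset.mem_range] at ht ⊢
          by_cases h : z < t
          · exact Or.inl ⟨ht.1, ht.2, h⟩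
          · right; omega
      _ ≤ _ := by simpa using Finset.card_union_le A (Finset.range (z + 1))
  have hrB : ∀ r ∈ sievePrimes B z, r.Prime ∧ ¬ r ∣ e1 ∧ ¬ r ∣ e2 ∧ ¬ r ∣ (e2 - e1) ∧ 2 < r := by
    intro r hr
    have h := (Finset.mem_filter.1 hr).2
    refine ⟨h.1, fun hh => h.2 ?_, fun hh => h.2 ?_, fun hh => h.2 ?_, ?_⟩
    · exact Dvd.dvd.mul_left (Dvd.dvd.mul_right (Dvd.dvd.mul_right hh _) _) _
    · exact Dvd.dvd.mul_left (Dvd.dvd.mul_right (Dvd.dvd.mul_left hh _) _) _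
    · exact Dvd.dvd.mul_left (Dvd.dvd.mul_left hh _) _
    · refine lt_of_le_of_ne h.1.two_le ?_
      rintro rfl; exact h.2 (Dvd.intro _ rfl)
  have hsieve := sieve_bound 2 (sievePrimes B z) (fun r hr => (hrB r hr).1)
    (fun r hr => (hrB r hr).2.2.2.2)
    (fun r => (Finset.range r).filter (fun t => r ∣ 1 + e1 * t) ∪
      (Finset.range r).filter (fun t => r ∣ 1 + e2 * t))
    (fun r _ => Finset.union_subset (Finset.filter_subset _ _) (Finset.filter_subset _ _))
    (fun r hr => by
      obtain ⟨hp, h1, h2, h3, _⟩ := hrB r hr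
      obtain ⟨t0, ht0⟩ := root_set r e1 1 hp h1
      obtain ⟨t1, ht1⟩ := root_set r e2 1 hp h2
      have hne : t0 ≠ t1 := by
        rintro rfl
        have m0 := (Finset.mem_filter.1 (ht0 ▸ Finset.mem_singleton_self t0)).2
        have m1 := (Finset.mem_filter.1 (ht1 ▸ Finset.mem_singleton_self t0)).2
        have : r ∣ (1 + e2 * t0) - (1 + e1 * t0) := Nat.dvd_sub m1 m0
        have e : (1 + e2 * t0) - (1 + e1 * t0) = (e2 - e1) * t0 := by
          rw [Nat.add_sub_add_left, Nat.sub_mul]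
        rw [e] at this
        rcases hp.dvd_mul.1 this with h | h
        · exact h3 h
        · have : r ∣ 1 := (Nat.dvd_add_left (h.mul_left e1)).1 m0
          exact hp.one_lt.ne' (Nat.dvd_one.1 this)
      simp only [ht0, ht1]
      exact Finset.card_pair hne) z X hz1 A (Finset.filter_subset _ _) (by
      intro t ht r hr h
      have hrz : r ≤ z := (Finset.mem_Icc.1 (Finset.mem_filter.1 hr).1).2
      have hp := (hrB r hr).1
      simp only [Finset.mem_union, Finset.mem_filter, dvd_mod_iff, hA] at h ht
      have l1 : t ≤ e1 * t := Nat.le_mul_of_pos_left _ he1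
      have l2 : t ≤ e2 * t := Nat.le_mul_of_pos_left _ (by omega)
      rcases h with h | h
      · have := (Nat.prime_dvd_prime_iff_eq hp ht.2.1.1).1 h.2
        omega
      · have := (Nat.prime_dvd_prime_iff_eq hp ht.2.1.2).1 h.2
        omega)
  have hS := sieveS_two_lower B y hB0 (Dvd.intro _ rfl)
  have hzy : (z : ℝ) = (y : ℝ) ^ 2 := by rw [hz]; push_cast; ring
  have hsplit' : (((Finset.range X).filter
      (fun t => (1 + e1 * t).Prime ∧ (1 + e2 * t).Prime)).card : ℝ)
      ≤ A.card + (z + 1) := by exact_mod_cast hsplit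
  rw [hzy] at hsplit' hsieve
  exact twin_analysis y X hy hX hy1 hy2 τ _ _ _ hτ hS hsplit' hsieve

/-- twin type numbers -/
def TwinType (n D : ℕ) : Prop := ∃ e1 e2, e1 < e2 ∧ e1 ∣ n ∧ e2 ∣ n ∧ (1 + e1 * D).Prime ∧
  (1 + e2 * D).Prime

open Classical in
theorem twin_bound (n : ℕ) (hn : 0 < n) : ∃ C : ℝ, 0 < C ∧ ∀ X : ℕ, 1 ≤ X →
    (((Finset.range X).filter (fun t => TwinType n t)).card : ℝ)
      ≤ C * (X / (Real.log (X + 1)) ^ 2) := by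
  have hC : ∀ p : ℕ × ℕ, ∃ C : ℝ, 0 ≤ C ∧ (1 ≤ p.1 → p.1 < p.2 → ∀ X : ℕ, 1 ≤ X →
    (((Finset.range X).filter (fun t => (1 + p.1 * t).Prime ∧ (1 + p.2 * t).Prime)).card : ℝ)
      ≤ C * (X / (Real.log (X + 1)) ^ 2)) := by
    intro p
    by_cases h : 1 ≤ p.1 ∧ p.1 < p.2
    · obtain ⟨C, h1, h2⟩ := twin_bound_pair p.1 p.2 h.1 h.2
      exact ⟨C, h1, fun _ _ => h2⟩
    · exact ⟨0, le_rfl, fun h1 h2 => absurd ⟨h1, h2⟩ h⟩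
  choose C hC0 hC1 using hC
  let I := (n.divisors ×ˢ n.divisors).filter (fun p : ℕ × ℕ => p.1 < p.2)
  refine ⟨∑ p ∈ I, C p + 1, by have := Finset.sum_nonneg (s := I) fun p _ => hC0 p; linarith, fun X hX => ?_⟩
  have h1 : ((Finset.range X).filter (fun t => TwinType n t)) ⊆ I.biUnion (fun p =>
      (Finset.range X).filter (fun t => (1 + p.1 * t).Prime ∧ (1 + p.2 * t).Prime)) := by
    intro t ht
    simp only [Finset.mem_filter] at ht
    obtain ⟨ht1, e1, e2, h, d1, d2, p1, p2⟩ := ht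
    simp only [Finset.mem_biUnion, I, Finset.mem_filter, Finset.mem_product, Nat.mem_divisors]
    exact ⟨(e1, e2), ⟨⟨⟨d1, hn.ne'⟩, d2, hn.ne'⟩, h⟩, ht1, p1, p2⟩
  have h2 := (Finset.card_le_card h1).trans Finset.card_biUnion_le
  have h3 : (((Finset.range X).filter (fun t => TwinType n t)).card : ℝ) ≤ ∑ p ∈ I,
    (((Finset.range X).filter (fun t => (1 + p.1 * t).Prime ∧ (1 + p.2 * t).Prime)).card : ℝ) := by
    exact_mod_cast h2
  have hXX : 0 ≤ (X : ℝ) / (Real.log (X + 1)) ^ 2 := by positivity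
  refine h3.trans ?_
  rw [add_mul, Finset.sum_mul]
  refine le_trans (Finset.sum_le_sum fun p hp => ?_) (le_add_of_nonneg_right (by linarith))
  simp only [I, Finset.mem_filter, Finset.mem_product, Nat.mem_divisors] at hp
  exact hC1 p (Nat.pos_of_dvd_of_pos hp.1.1.1 hn) hp.2 X hX


lemma prod_odd (s : Finset ℕ) : (∀ r ∈ s, 3 ≤ r ∧ r % 2 = 1) →
    ∏ r ∈ s, ((r : ℝ) / (r - 1)) ≤ √(2 * s.card + 1) := by
  induction s using Finset.induction_on_max with
  | empty => intro _; simp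
  | insert a s hmax ih =>
    intro hs
    have ha : a ∉ s := fun h => lt_irrefl _ (hmax a h)
    rw [Finset.prod_insert ha, Finset.card_insert_of_notMem ha]
    have h1 := ih (fun r hr => hs r (Finset.mem_insert_of_mem hr))
    have ha3 := hs a (Finset.mem_insert_self _ _)
    have hcard : s.card ≤ (Finset.Icc 1 ((a - 1) / 2 - 1)).card := by
      apply Finset.card_le_card_of_injOn (fun r => (r - 1) / 2)
      · intro r hr
        have := hs r (Finset.mem_insert_of_mem hr)
        have := hmax r hr
        simp only [Finset.coe_Icc, Set.mem_Icc]
        omega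
      · intro r hr r' hr' h
        have := hs r (Finset.mem_insert_of_mem hr)
        have := hs r' (Finset.mem_insert_of_mem hr')
        simp only at h
        omega
    rw [Nat.card_Icc] at hcard
    have ha2 : 2 * s.card + 3 ≤ a := by omega
    have ha2' : 2 * (s.card : ℝ) + 3 ≤ a := by exact_mod_cast ha2
    set c : ℝ := (s.card : ℝ) with hc
    have hc0 : 0 ≤ c := by positivity
    have h2 : (a : ℝ) / (a - 1) ≤ (2 * c + 3) / (2 * c + 2) := by
      rw [div_le_div_iff₀ (by linarith) (by linarith)]; nlinarith
    have h3 : 0 ≤ ∏ r ∈ s, ((r : ℝ) / (r - 1)) := by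
      apply Finset.prod_nonneg
      intro r hr
      have := (hs r (Finset.mem_insert_of_mem hr)).1
      have : (3 : ℝ) ≤ r := by exact_mod_cast this
      apply div_nonneg <;> linarith
    calc _ ≤ (2 * c + 3) / (2 * c + 2) * √(2 * c + 1) := by
          apply mul_le_mul h2 h1 h3 (by positivity)
      _ ≤ _ := by
          apply Real.le_sqrt_of_sq_le
          rw [mul_pow, Real.sq_sqrt (by positivity), div_pow, div_mul_eq_mul_div, div_le_iff₀ (by positivity)]
          push_cast
          nlinarith [sq_nonneg c]

lemma two_pow_card_le (s : Finset ℕ) (hs : ∀ r ∈ s, 2 ≤ r) : 2 ^ s.card ≤ ∏ r ∈ s, r := by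
  rw [← Finset.prod_const]
  exact Finset.prod_le_prod' hs

lemma odd_totient_bound (D i : ℕ) (hD : D % 2 = 1) (hDi : D < 2 ^ (i + 1)) :
    (D : ℝ) / D.totient ≤ √(2 * i + 1) := by
  have hD0 : D ≠ 0 := by rintro rfl; simp at hD
  have hw : D.primeFactors.card ≤ i := by
    have h1 := two_pow_card_le D.primeFactors (fun r hr => (Nat.prime_of_mem_primeFactors hr).two_le)
    have h2 : ∏ r ∈ D.primeFactors, r ≤ D := Nat.le_of_dvd (by omega) (Nat.prod_primeFactors_dvd D)
    have h3 : 2 ^ D.primeFactors.card < 2 ^ (i + 1) := by omega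
    have := (Nat.pow_lt_pow_iff_right (by norm_num)).1 h3
    omega
  have h := prod_odd D.primeFactors (fun r hr => by
    have hp := Nat.prime_of_mem_primeFactors hr
    have hd := Nat.dvd_of_mem_primeFactors hr
    have h2 : r % 2 = 1 := by
      rcases Nat.mod_two_eq_zero_or_one r with h | h
      · have : 2 ∣ D := (Nat.dvd_of_mod_eq_zero h).trans hd
        omega
      · exact h
    have := hp.two_le
    omega)
  have e : (D : ℝ) / D.totient = ∏ r ∈ D.primeFactors, ((r : ℝ) / (r - 1)) := by
    have := totient_div D hD0
    rw [← inv_div, this, ← Finset.prod_inv_distrib]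
    apply Finset.prod_congr rfl
    intro r hr
    have : (2 : ℝ) ≤ r := by exact_mod_cast (Nat.prime_of_mem_primeFactors hr).two_le
    have : (r : ℝ) - 1 ≠ 0 := by linarith
    field_simp
  rw [e]
  refine h.trans (Real.sqrt_le_sqrt ?_)
  have : (D.primeFactors.card : ℝ) ≤ i := by exact_mod_cast hw
  linarith


lemma coprime_factorial_gt (D K : ℕ) (hD : 1 < D) (h : Nat.Coprime D (Nat.factorial K)) : K < D := by
  by_contra hle
  push Not at hle
  have : D ∣ Nat.factorial K := Nat.dvd_factorial (by omega) hle
  have := Nat.Coprime.eq_one_of_dvd h this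
  omega

/-- If no multiple works then every large prime `≡ -1` modulo `K!` is bad. -/
lemma bad_prime (n : ℕ) (hn : 0 < n) (heven : 2 ∣ n)
    (hno : ¬ ∃ m : ℕ, 0 < m ∧ n ∣ m ∧ omegaStar m = omegaStar n + 1)
    (K : ℕ) (hK4 : 4 ≤ K) (hKn : n ≤ K) (p : ℕ) (hp : p.Prime) (hpn : n + 1 < p)
    (hpM : Nat.factorial K ∣ p + 1) :
    ∃ D, TwinType n D ∧ D % 2 = 1 ∧ Nat.Coprime D (Nat.factorial K) ∧ K < D ∧ D ∣ p - 1 := by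
  classical
  have h4 : 4 ∣ p + 1 := (Nat.dvd_factorial (by norm_num) hK4).trans hpM
  obtain ⟨D0, hD0⟩ : ∃ D0, p - 1 = 2 * D0 := ⟨(p - 1) / 2, by omega⟩
  have hD0odd : D0 % 2 = 1 := by omega
  have hD0cop : Nat.Coprime D0 (Nat.factorial K) := by
    apply Nat.coprime_of_dvd
    intro r hr h1 h2
    have a1 : r ∣ p + 1 := h2.trans hpM
    have a2 : r ∣ p - 1 := hD0 ▸ h1.mul_left 2
    have a3 : r ∣ (p + 1) - (p - 1) := Nat.dvd_sub a1 a2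
    have e : (p + 1) - (p - 1) = 2 := by omega
    rw [e] at a3
    have : r = 2 := (Nat.prime_dvd_prime_iff_eq hr Nat.prime_two).1 a3
    subst this
    omega
  have hnK : n ∣ Nat.factorial K := Nat.dvd_factorial hn hKn
  have hmono : ∀ D, 0 < D → (n.divisors.filter (fun d => Nat.Prime (d + 1))) ⊆
      ((n * D).divisors.filter (fun d => Nat.Prime (d + 1))) := by
    intro D hD d hd
    simp only [Finset.mem_filter, Nat.mem_divisors] at hd ⊢
    exact ⟨⟨hd.1.1.mul_right D, by positivity⟩, hd.2⟩
  have hgt : ∀ D, 0 < D → ∀ d, d ∣ n * D → ¬ d ∣ n → (d + 1).Prime → omegaStar n < omegaStar (n * D) := by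
    intro D hD d h1 h2 h3
    apply Finset.card_lt_card
    refine ⟨hmono D hD, fun h => h2 ?_⟩
    have : d ∈ ((n * D).divisors.filter (fun d => Nat.Prime (d + 1))) := by
      simp only [Finset.mem_filter, Nat.mem_divisors]
      exact ⟨⟨h1, by positivity⟩, h3⟩
    have := h this
    simp only [Finset.mem_filter, Nat.mem_divisors] at this
    exact this.1.1
  have hD0pos : 0 < D0 := by omega
  have hex : ∃ D, D ∣ D0 ∧ omegaStar n < omegaStar (n * D) := by
    refine ⟨D0, dvd_rfl, hgt D0 hD0pos (p - 1) ?_ ?_ ?_⟩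
    · rw [hD0]; exact Nat.mul_dvd_mul_right heven D0
    · intro h
      have := Nat.le_of_dvd hn h
      omega
    · have : p - 1 + 1 = p := by omega
      rwa [this]
  obtain ⟨hDD, hDw⟩ := Nat.find_spec hex
  have hmin := fun m hm => Nat.find_min hex (m := m) hm
  set D := Nat.find hex with hDdef
  have hDpos : 0 < D := Nat.pos_of_dvd_of_pos hDD hD0pos
  have hDcop : Nat.Coprime D (Nat.factorial K) := Nat.Coprime.coprime_dvd_left hDD hD0cop
  have hD1 : 1 < D := by
    rcases Nat.lt_or_ge 1 D with h | h
    · exact h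
    · have : D = 1 := by omega
      rw [this, mul_one] at hDw
      exact absurd hDw (lt_irrefl _)
  have hne : omegaStar (n * D) ≠ omegaStar n + 1 := fun h =>
    hno ⟨n * D, by positivity, Dvd.intro _ rfl, h⟩
  have hcard : 1 < (((n * D).divisors.filter (fun d => Nat.Prime (d + 1))) \
      (n.divisors.filter (fun d => Nat.Prime (d + 1)))).card := by
    rw [Finset.card_sdiff_of_subset (hmono D hDpos)]
    unfold omegaStar at hne hDw
    omega
  obtain ⟨d1, hd1, d2, hd2, hd12⟩ := Finset.one_lt_card.1 hcard
  have key : ∀ d ∈ (((n * D).divisors.filter (fun d => Nat.Prime (d + 1))) \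
      (n.divisors.filter (fun d => Nat.Prime (d + 1)))), ∃ e, e ∣ n ∧ d = e * D ∧ (1 + e * D).Prime := by
    intro d hd
    simp only [Finset.mem_sdiff, Finset.mem_filter, Nat.mem_divisors, not_and] at hd
    obtain ⟨⟨⟨hd, _⟩, hdp⟩, hdn⟩ := hd
    have hdn' : ¬ d ∣ n := fun h => hdn ⟨h, hn.ne'⟩ hdp
    obtain ⟨e, D', he, hD', rfl⟩ := exists_dvd_and_dvd_of_dvd_mul hd
    have hDeq : D' = D := by
      by_contra hne'
      have hlt : D' < D := lt_of_le_of_ne (Nat.le_of_dvd hDpos hD') hne'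
      exact hmin D' hlt ⟨hD'.trans hDD, hgt D' (Nat.pos_of_dvd_of_pos hD' hDpos) (e * D')
        (Nat.mul_dvd_mul_right he D') hdn' hdp⟩
    subst hDeq
    exact ⟨e, he, rfl, by rwa [add_comm]⟩
  obtain ⟨e1, he1, rfl, hp1⟩ := key d1 hd1
  obtain ⟨e2, he2, rfl, hp2⟩ := key d2 hd2
  have he12 : e1 ≠ e2 := fun h => hd12 (by rw [h])
  refine ⟨D, ?_, ?_, hDcop, coprime_factorial_gt D K hD1 hDcop, ?_⟩
  · rcases lt_or_gt_of_ne he12 with h | h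
    · exact ⟨e1, e2, h, he1, he2, hp1, hp2⟩
    · exact ⟨e2, e1, h, he2, he1, hp2, hp1⟩
  · rcases Nat.mod_two_eq_zero_or_one D with h | h
    · have : 2 ∣ D0 := (Nat.dvd_of_mod_eq_zero h).trans hDD
      omega
    · exact h
  · rw [hD0]; exact hDD.mul_left 2


open ArithmeticFunction.vonMangoldt in
lemma dyadic_block (M N : ℕ) (hN : 1 ≤ N) (hM : 0 < M)
    (h : (N : ℝ) * (((Finset.Ico (2 ^ N) (2 ^ (N + 1))).filter
      (fun p => p.Prime ∧ M ∣ p + 1)).card : ℝ) ≤ 1 / 8 * (2 ^ N / (M.totient : ℝ)))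
    (x : ℝ) (hx : 1 < x) :
    ∑ n ∈ Finset.Ico ((2 : ℕ) ^ N) (2 ^ (N + 1)),
      (if n.Prime then residueClass (-1 : ZMod M) n else 0) / (n : ℝ) ^ x
      ≤ 1 / (4 * M.totient) * ((2 : ℝ) ^ (1 - x)) ^ N := by
  set A := (Finset.Ico (2 ^ N) (2 ^ (N + 1))).filter (fun p => p.Prime ∧ M ∣ p + 1) with hA
  have hφ : (0 : ℝ) < M.totient := by exact_mod_cast Nat.totient_pos.2 hM
  have hN' : (1 : ℝ) ≤ N := by exact_mod_cast hN
  have h2 : (0 : ℝ) < ((2 : ℝ) ^ x) ^ N := by positivity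
  have hlog : Real.log 2 ≤ 1 := by have := Real.log_two_lt_d9; linarith
  have step1 : ∑ n ∈ Finset.Ico ((2 : ℕ) ^ N) (2 ^ (N + 1)),
      (if n.Prime then residueClass (-1 : ZMod M) n else 0) / (n : ℝ) ^ x ≤
      ∑ n ∈ A, (2 * N) / ((2 : ℝ) ^ x) ^ N := by
    rw [hA, Finset.sum_filter]
    apply Finset.sum_le_sum
    intro n hn
    rw [Finset.mem_Ico] at hn
    by_cases hp : n.Prime
    · by_cases hm : M ∣ n + 1
      · rw [if_pos hp, if_pos ⟨hp, hm⟩]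
        have hn1 : (2 : ℝ) ^ N ≤ n := by exact_mod_cast hn.1
        have hn2 : (n : ℝ) ≤ 2 ^ (N + 1) := by exact_mod_cast hn.2.le
        have hn0 : (0 : ℝ) < n := lt_of_lt_of_le (by positivity) hn1
        apply div_le_div₀ (by positivity) _ h2
        · calc ((2 : ℝ) ^ x) ^ N = ((2 : ℝ) ^ N) ^ x := by
                rw [← Real.rpow_natCast, ← Real.rpow_natCast, ← Real.rpow_mul (by norm_num),
                  ← Real.rpow_mul (by norm_num), mul_comm]
            _ ≤ _ := Real.rpow_le_rpow (by positivity) hn1 (by linarith)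
        · refine (residueClass_le _ _).trans (ArithmeticFunction.vonMangoldt_le_log.trans ?_)
          calc Real.log n ≤ Real.log (2 ^ (N + 1)) := Real.log_le_log hn0 hn2
            _ = (N + 1) * Real.log 2 := by rw [Real.log_pow]; push_cast; ring
            _ ≤ (N + 1) * 1 := by gcongr
            _ ≤ _ := by linarith
      · have : residueClass (-1 : ZMod M) n = 0 := by
          apply Set.indicator_of_notMem
          intro hh
          apply hm
          have hh' : (n : ZMod M) = -1 := hh
          rw [← ZMod.natCast_eq_zero_iff]
          push_cast
          rw [hh']; ring
        rw [if_pos hp, this, zero_div]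
        split_ifs <;> positivity
    · rw [if_neg hp, zero_div]
      split_ifs <;> positivity
  refine step1.trans ?_
  rw [Finset.sum_const, nsmul_eq_mul]
  have e : ((2 : ℝ) ^ (1 - x)) ^ N = 2 ^ N / ((2 : ℝ) ^ x) ^ N := by
    rw [Real.rpow_sub (by norm_num), Real.rpow_one, div_pow]
  rw [e]
  calc (A.card : ℝ) * (2 * N / ((2 : ℝ) ^ x) ^ N) = 2 * (N * A.card) / ((2 : ℝ) ^ x) ^ N := by ring
    _ ≤ 2 * (1 / 8 * (2 ^ N / (M.totient : ℝ))) / ((2 : ℝ) ^ x) ^ N := by gcongr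
    _ = _ := by field_simp; norm_num

open ArithmeticFunction.vonMangoldt in
theorem dirichlet_dyadic (M : ℕ) (hM : 0 < M) (N0 : ℕ)
    (h : ∀ N ≥ N0, (N : ℝ) * (((Finset.Ico (2 ^ N) (2 ^ (N + 1))).filter
      (fun p => p.Prime ∧ M ∣ p + 1)).card : ℝ) ≤ 1 / 8 * (2 ^ N / (M.totient : ℝ))) : False := by
  have : NeZero M := ⟨hM.ne'⟩
  have hφ : (0 : ℝ) < M.totient := by exact_mod_cast Nat.totient_pos.2 hM
  set a : ZMod M := -1 with ha
  have hau : IsUnit a := isUnit_one.neg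
  set N1 := max N0 1 with hN1
  set P : ℕ → ℝ := fun n => if n.Prime then residueClass a n else 0 with hP
  set Q : ℕ → ℝ := fun n => if n.Prime then 0 else residueClass a n with hQ
  have hP0 : ∀ n, 0 ≤ P n := fun n => by
    simp only [hP]; split_ifs; exacts [residueClass_nonneg a n, le_rfl]
  have hQ0 : ∀ n, 0 ≤ Q n := fun n => by
    simp only [hQ]; split_ifs; exacts [le_rfl, residueClass_nonneg a n]
  have hPQ : ∀ n, residueClass a n = Q n + P n := fun n => by
    simp only [hP, hQ]; split_ifs <;> simp
  have hle1 : ∀ (f : ℕ → ℝ), (∀ n, 0 ≤ f n) → ∀ x : ℝ, 1 < x → ∀ n : ℕ, f n / (n : ℝ) ^ x ≤ f n / n := by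
    intro f hf x hx n
    rcases n.eq_zero_or_pos with rfl | hn
    · simp [Real.zero_rpow (by linarith : x ≠ 0)]
    · refine div_le_div_of_nonneg_left (hf n) (mod_cast hn) ?_
      conv_lhs => rw [← Real.rpow_one n]
      exact Real.rpow_le_rpow_of_exponent_le (by norm_cast) hx.le
  have hQs : Summable fun n : ℕ => Q n / n := summable_residueClass_non_primes_div a
  set C1 := ∑' n : ℕ, Q n / n with hC1
  set S0 := ∑ n ∈ Finset.range (2 ^ N1), P n / n with hS0
  obtain ⟨C', hC'⟩ := LSeries_residueClass_lower_bound hau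
  have main : ∀ x ∈ Set.Ioc (1 : ℝ) 2, (M.totient : ℝ)⁻¹ / (x - 1) - C' ≤
      C1 + (S0 + 1 / (4 * M.totient) * (3 / (x - 1))) := by
    intro x hx
    have hx1 : 1 < x := hx.1
    refine (hC' hx).trans ?_
    have hsum : Summable fun n : ℕ => residueClass a n / (n : ℝ) ^ x :=
      LSeries.summable_real_of_abscissaOfAbsConv_lt <|
        (abscissaOfAbsConv_residueClass_le_one a).trans_lt <| mod_cast hx1
    have hQx : Summable fun n : ℕ => Q n / (n : ℝ) ^ x :=
      Summable.of_nonneg_of_le (fun n => div_nonneg (hQ0 n) (by positivity)) (hle1 Q hQ0 x hx1) hQs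
    have hPx : Summable fun n : ℕ => P n / (n : ℝ) ^ x := by
      refine (hsum.sub hQx).congr fun n => ?_
      rw [hPQ]; ring
    have e : ∑' n : ℕ, residueClass a n / (n : ℝ) ^ x =
        ∑' n : ℕ, Q n / (n : ℝ) ^ x + ∑' n : ℕ, P n / (n : ℝ) ^ x := by
      rw [← hQx.tsum_add hPx]
      refine tsum_congr fun n => ?_
      rw [hPQ]; ring
    rw [e]
    refine add_le_add (hQx.tsum_le_tsum (hle1 Q hQ0 x hx1) hQs) ?_
    set r : ℝ := (2 : ℝ) ^ (1 - x) with hr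
    have hr0 : 0 < r := by positivity
    have hr1 : 1 / (1 - r) ≤ 3 / (x - 1) ∧ r < 1 := by
      have h1 : 1 + (x - 1) / 2 ≤ (2 : ℝ) ^ (x - 1) := by
        rw [Real.rpow_def_of_pos (by norm_num)]
        have := Real.add_one_le_exp (Real.log 2 * (x - 1))
        have := Real.log_two_gt_d9
        nlinarith
      have h2 : r * (2 : ℝ) ^ (x - 1) = 1 := by
        rw [hr, ← Real.rpow_add (by norm_num)]; norm_num
      have h3 : r * (1 + (x - 1) / 2) ≤ 1 := by
        have := mul_le_mul_of_nonneg_left h1 hr0.le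
        linarith
      have hx2 := hx.2
      have h4 : r < 1 := by nlinarith
      refine ⟨?_, h4⟩
      rw [div_le_div_iff₀ (by linarith) (by linarith)]
      nlinarith
    have hblock : ∀ k, ∑ n ∈ Finset.range (2 ^ (N1 + k)), P n / (n : ℝ) ^ x ≤
        S0 + 1 / (4 * M.totient) * ∑ N ∈ Finset.range k, r ^ (N1 + N) := by
      intro k
      induction k with
      | zero =>
        simp only [add_zero, Finset.range_zero, Finset.sum_empty, mul_zero]
        exact Finset.sum_le_sum fun n _ => hle1 P hP0 x hx1 n
      | succ k ih =>
        rw [Finset.sum_range_succ, mul_add, ← add_assoc S0, ← add_assoc N1,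
          ← Finset.sum_range_add_sum_Ico _ (Nat.pow_le_pow_right (by norm_num) (Nat.le_succ (N1 + k)))]
        refine add_le_add ih ?_
        exact dyadic_block M (N1 + k) (by omega) hM (h _ (by omega)) x hx1
    refine Real.tsum_le_of_sum_range_le (fun n => div_nonneg (hP0 n) (by positivity)) fun k => ?_
    calc ∑ n ∈ Finset.range k, P n / (n : ℝ) ^ x ≤ ∑ n ∈ Finset.range (2 ^ (N1 + k)), P n / (n : ℝ) ^ x := by
          apply Finset.sum_le_sum_of_subset_of_nonneg
          · intro n hn
            rw [Finset.mem_range] at hn ⊢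
            have : N1 + k < 2 ^ (N1 + k) := Nat.lt_two_pow_self
            omega
          · intro n _ _
            exact div_nonneg (hP0 n) (by positivity)
      _ ≤ _ := hblock k
      _ ≤ _ := by
        gcongr
        refine le_trans ?_ hr1.1
        calc ∑ N ∈ Finset.range k, r ^ (N1 + N) ≤ ∑ N ∈ Finset.range k, r ^ N := by
              apply Finset.sum_le_sum
              intro N _
              exact pow_le_pow_of_le_one hr0.le hr1.2.le (by omega)
          _ ≤ ∑' N, r ^ N := (summable_geometric_of_lt_one hr0.le hr1.2).sum_le_tsum _
              (fun _ _ => by positivity)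
          _ = 1 / (1 - r) := by rw [tsum_geometric_of_lt_one hr0.le hr1.2, one_div]
  set T := C1 + S0 + C' with hT
  have main2 : ∀ u ∈ Set.Ioc (0 : ℝ) 1, 1 / (4 * M.totient) ≤ T * u := by
    intro u hu
    have := main (1 + u) ⟨by linarith [hu.1], by linarith [hu.2]⟩
    rw [add_sub_cancel_left] at this
    have hu0 := hu.1
    have e1 : (M.totient : ℝ)⁻¹ / u = 1 / (4 * M.totient) * (3 / u) + 1 / (4 * M.totient) / u := by
      field_simp; norm_num
    have : 1 / (4 * (M.totient : ℝ)) / u ≤ T := by rw [hT]; linarith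
    rwa [div_le_iff₀ hu0] at this
  set c := 1 / (4 * (M.totient : ℝ)) with hc
  have hc0 : 0 < c := by positivity
  have hT0 : 0 < T := by
    have := main2 1 ⟨by norm_num, le_rfl⟩
    linarith
  have hu : min 1 (c / (2 * T)) ∈ Set.Ioc (0 : ℝ) 1 := ⟨by positivity, min_le_left _ _⟩
  have h1 := main2 _ hu
  have h2 : T * min 1 (c / (2 * T)) ≤ T * (c / (2 * T)) :=
    mul_le_mul_of_nonneg_left (min_le_right _ _) hT0.le
  have h3 : T * (c / (2 * T)) = c / 2 := by field_simp
  linarith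


lemma log_two_pow_ge (k : ℕ) (x : ℝ) (hx : (2 : ℝ) ^ k ≤ x) : (k : ℝ) / 2 ≤ Real.log x := by
  have h1 : Real.log ((2 : ℝ) ^ k) ≤ Real.log x := Real.log_le_log (by positivity) hx
  rw [Real.log_pow] at h1
  have := Real.log_two_gt_d9
  have hk : (0 : ℝ) ≤ k := by positivity
  nlinarith

/-- count of primes for a single `D` -/
lemma count_single (D M N m i : ℕ) (hD2 : D % 2 = 1) (hM : 0 < M) (hcop : Nat.Coprime D M)
    (hMm : M ≤ 2 ^ m) (hm : 1 ≤ m) (hi : i + 2 * m ≤ N) (hDi : 2 ^ i ≤ D) (hDi' : D < 2 ^ (i + 1)) :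
    (((Finset.Ico (2 ^ N) (2 ^ (N + 1))).filter
      (fun p => p.Prime ∧ M ∣ p + 1 ∧ D ∣ p - 1)).card : ℝ) ≤
      512 * (2 ^ N / (M.totient : ℝ)) * (√(2 * i + 1) / (2 ^ i * ((N : ℝ) - i))) := by
  set A := (Finset.Ico (2 ^ N) (2 ^ (N + 1))).filter
      (fun p => p.Prime ∧ M ∣ p + 1 ∧ D ∣ p - 1) with hA
  have hD0 : 0 < D := by omega
  have hNi : (1 : ℝ) ≤ (N : ℝ) - i := by
    have : i + 1 ≤ N := by omega
    have : (i : ℝ) + 1 ≤ N := by exact_mod_cast this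
    linarith
  have hφM : (0 : ℝ) < M.totient := by exact_mod_cast Nat.totient_pos.2 hM
  have hφD : (0 : ℝ) < D.totient := by exact_mod_cast Nat.totient_pos.2 hD0
  rcases A.eq_empty_or_nonempty with h0 | ⟨p0, hp0⟩
  · rw [h0, Finset.card_empty, Nat.cast_zero]
    positivity
  set q := D * M with hq
  have hq0 : 0 < q := Nat.mul_pos hD0 hM
  set Y := 2 ^ (N + 1) / q + 1 with hY
  have hcard : A.card ≤ ((Finset.range Y).filter (fun t => (p0 % q + q * t).Prime)).card := by
    apply Finset.card_le_card_of_injOn (fun p => p / q)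
    · intro p hp
      have hp' := hp
      simp only [hA, Finset.coe_filter, Finset.mem_Ico, Set.mem_ofPred_eq, Finset.mem_filter] at hp hp0
      have hmod : p ≡ p0 [MOD q] := by
        rw [hq, ← Nat.modEq_and_modEq_iff_modEq_mul hcop]
        constructor
        · have h1 : 1 ≡ p [MOD D] := (Nat.modEq_iff_dvd' hp.2.1.one_lt.le).2 hp.2.2.2
          have h2 : 1 ≡ p0 [MOD D] := (Nat.modEq_iff_dvd' hp0.2.1.one_lt.le).2 hp0.2.2.2
          exact h1.symm.trans h2
        · have h1 : p + 1 ≡ p0 + 1 [MOD M] :=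
            ((Nat.modEq_zero_iff_dvd).2 hp.2.2.1).trans ((Nat.modEq_zero_iff_dvd).2 hp0.2.2.1).symm
          exact Nat.ModEq.add_right_cancel' 1 h1
      have e : p0 % q + q * (p / q) = p := by
        rw [← hmod]; exact Nat.mod_add_div p q
      simp only [Finset.coe_filter, Finset.mem_range, Set.mem_ofPred_eq]
      refine ⟨?_, by rw [e]; exact hp.2.1⟩
      have := Nat.div_le_div_right (c := q) hp.1.2.le
      omega
    · intro p hp p' hp' h
      simp only [hA, Finset.coe_filter, Finset.mem_Ico, Set.mem_ofPred_eq, Finset.mem_filter] at hp hp'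
      have hmod : p ≡ p' [MOD q] := by
        rw [hq, ← Nat.modEq_and_modEq_iff_modEq_mul hcop]
        constructor
        · have h1 : 1 ≡ p [MOD D] := (Nat.modEq_iff_dvd' hp.2.1.one_lt.le).2 hp.2.2.2
          have h2 : 1 ≡ p' [MOD D] := (Nat.modEq_iff_dvd' hp'.2.1.one_lt.le).2 hp'.2.2.2
          exact h1.symm.trans h2
        · have h1 : p + 1 ≡ p' + 1 [MOD M] :=
            ((Nat.modEq_zero_iff_dvd).2 hp.2.2.1).trans ((Nat.modEq_zero_iff_dvd).2 hp'.2.2.1).symm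
          exact Nat.ModEq.add_right_cancel' 1 h1
      simp only at h
      rw [← Nat.mod_add_div p q, ← Nat.mod_add_div p' q, h, hmod]
  have hbt := brun_titchmarsh q (p0 % q) Y hq0 (Nat.le_add_left 1 _)
  have hcard' : (A.card : ℝ) ≤ ((Finset.range Y).filter (fun t => (p0 % q + q * t).Prime)).card := by
    exact_mod_cast hcard
  refine hcard'.trans (hbt.trans ?_)
  have hqR : (0 : ℝ) < q := by exact_mod_cast hq0
  -- upper bound for q
  have hqup : q ≤ 2 ^ (i + 1 + m) := by
    rw [hq, pow_add]
    exact Nat.mul_le_mul hDi'.le hMm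
  have hqup' : (q : ℝ) ≤ 2 ^ (i + 1 + m) := by exact_mod_cast hqup
  have hYup : (Y : ℝ) ≤ 2 ^ (N + 2) / q := by
    have h1 : ((2 ^ (N + 1) / q : ℕ) : ℝ) ≤ 2 ^ (N + 1) / q := by
      have := @Nat.cast_div_le ℝ _ _ _ (2 ^ (N + 1)) q
      push_cast at this ⊢
      exact this
    have h2 : (1 : ℝ) ≤ 2 ^ (N + 1) / q := by
      rw [le_div_iff₀ hqR, one_mul]
      exact hqup'.trans (pow_le_pow_right₀ (by norm_num) (by omega))
    have e : (2 : ℝ) ^ (N + 2) / q = 2 ^ (N + 1) / q + 2 ^ (N + 1) / q := by ring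
    rw [hY, e]; push_cast at h1 ⊢
    linarith
  have hYlow : (2 : ℝ) ^ (N - i - m) ≤ (Y : ℝ) + 1 := by
    have h1 : 2 ^ (N + 1) < Y * q := by
      rw [hY, mul_comm]; exact Nat.lt_mul_div_succ _ hq0
    have h2 : 2 ^ (N - i - m) ≤ Y := by
      have h3 : 2 ^ (N - i - m) * 2 ^ (i + 1 + m) < Y * 2 ^ (i + 1 + m) := by
        rw [← pow_add]
        have : N - i - m + (i + 1 + m) = N + 1 := by omega
        rw [this]
        exact h1.trans_le (Nat.mul_le_mul_left _ hqup)
      exact (Nat.lt_of_mul_lt_mul_right h3).le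
    have : (2 : ℝ) ^ (N - i - m) ≤ Y := by exact_mod_cast h2
    linarith
  have hlog : ((N : ℝ) - i) / 4 ≤ Real.log ((Y : ℝ) + 1) := by
    refine le_trans ?_ (log_two_pow_ge _ _ hYlow)
    have h1 : N ≤ 2 * (N - i - m) + i := by omega
    have h2 : (N : ℝ) ≤ 2 * ((N - i - m : ℕ) : ℝ) + i := by exact_mod_cast h1
    linarith
  have hφ : (q.totient : ℝ) = D.totient * M.totient := by
    rw [hq, Nat.totient_mul hcop]; push_cast; ring
  have htot := odd_totient_bound D i hD2 hDi'
  have hDR : (2 : ℝ) ^ i ≤ D := by exact_mod_cast hDi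
  have hDR0 : (0 : ℝ) < D := by exact_mod_cast hD0
  have hinv : (1 : ℝ) / D.totient ≤ √(2 * i + 1) / 2 ^ i := by
    rw [div_le_div_iff₀ hφD (by positivity), one_mul]
    rw [div_le_iff₀ hφD] at htot
    exact hDR.trans htot
  calc 32 * ((q : ℝ) / q.totient) * (Y / Real.log (Y + 1))
      ≤ 32 * ((q : ℝ) / q.totient) * ((2 ^ (N + 2) / q) / (((N : ℝ) - i) / 4)) := by
        gcongr
    _ = 512 * (2 ^ N / (M.totient : ℝ)) * ((1 / D.totient) / ((N : ℝ) - i)) := by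
        rw [hφ]
        have : (N : ℝ) - i ≠ 0 := by linarith
        field_simp
        ring
    _ ≤ 512 * (2 ^ N / (M.totient : ℝ)) * ((√(2 * i + 1) / 2 ^ i) / ((N : ℝ) - i)) := by
        gcongr
    _ = _ := by rw [div_div]


/-- weights -/
noncomputable def wgt (i : ℕ) : ℝ := 1 / (((i : ℝ) + 1) * √((i : ℝ) + 1))

lemma wgt_nonneg (i : ℕ) : 0 ≤ wgt i := by unfold wgt; positivity

lemma summable_wgt : Summable wgt := by
  have h := (summable_nat_add_iff 1).2
    (Real.summable_one_div_nat_rpow.2 (by norm_num : (1 : ℝ) < 3 / 2))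
  refine h.congr fun i => ?_
  unfold wgt
  rw [Real.sqrt_eq_rpow]
  have : (0 : ℝ) < (i : ℝ) + 1 := by positivity
  push_cast
  rw [show (3 / 2 : ℝ) = 1 + 1 / 2 by norm_num, Real.rpow_add this, Real.rpow_one]

lemma harm_le (N : ℕ) : ∑ i ∈ Finset.range N, (1 : ℝ) / (i + 1) ≤ 1 + Real.log N := by
  have h := harmonic_le_one_add_log N
  unfold harmonic at h
  push_cast at h
  simpa [one_div] using h

lemma term_bound (N i : ℕ) (hi : i < N) : wgt i * i / ((N : ℝ) - i) ≤
    (1 / ((i : ℝ) + 1) + 1 / ((N : ℝ) - i)) * √(2 / N) := by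
  have hb : (1 : ℝ) ≤ (N : ℝ) - i := by
    have : (i : ℝ) + 1 ≤ N := by exact_mod_cast hi
    linarith
  have hN : (0 : ℝ) < N := by
    have : 0 < N := by omega
    exact_mod_cast this
  set a : ℝ := (i : ℝ) + 1 with ha
  set b : ℝ := (N : ℝ) - i with hbd
  have ha1 : 1 ≤ a := by have : (0 : ℝ) ≤ i := by positivity
                         linarith
  have hab : (N : ℝ) ≤ a + b := by rw [ha, hbd]; linarith
  have hi' : (i : ℝ) ≤ a := by linarith
  have h1 : wgt i * i / b ≤ 1 / √a / b := by
    have : wgt i * i ≤ 1 / √a := by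
      unfold wgt
      rw [← ha, div_mul_eq_mul_div, one_mul, div_le_div_iff₀ (by positivity) (by positivity), one_mul]
      exact mul_le_mul_of_nonneg_right hi' (by positivity)
    gcongr
  refine h1.trans ?_
  have key : ∀ c : ℝ, 0 < c → (N : ℝ) ≤ 2 * c → 1 / √c ≤ √(2 / N) := by
    intro c hc hcN
    rw [← Real.sqrt_one, ← Real.sqrt_div (by norm_num)]
    apply Real.sqrt_le_sqrt
    rw [div_le_div_iff₀ hc hN]; linarith
  rcases le_total a b with h | h
  · have k := key b (by linarith) (by linarith)
    have h2 : 1 / √a / b ≤ 1 / a * (1 / √b) := by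
      rw [div_div, div_mul_div_comm, one_mul]
      apply div_le_div_of_nonneg_left (by norm_num) (by positivity)
      have s1 : √a ≤ √b := Real.sqrt_le_sqrt h
      have s2 : √a * √a = a := Real.mul_self_sqrt (by linarith)
      have s3 : √b * √b = b := Real.mul_self_sqrt (by linarith)
      have s4 : 0 ≤ √a * √b := by positivity
      calc a * √b = (√a * √b) * √a := by nth_rewrite 1 [← s2]; ring
        _ ≤ (√a * √b) * √b := by gcongr
        _ = √a * b := by nth_rewrite 3 [← s3]; ring
    calc _ ≤ 1 / a * (1 / √b) := h2
      _ ≤ 1 / a * √(2 / N) := by gcongr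
      _ ≤ _ := by
        apply mul_le_mul_of_nonneg_right _ (by positivity)
        have : 0 ≤ 1 / b := by positivity
        linarith
  · have k := key a (by linarith) (by linarith)
    calc 1 / √a / b = 1 / b * (1 / √a) := by ring
      _ ≤ 1 / b * √(2 / N) := by gcongr
      _ ≤ _ := by
        apply mul_le_mul_of_nonneg_right _ (by positivity)
        have : 0 ≤ 1 / a := by positivity
        linarith

lemma tendsto_aux : Tendsto (fun N : ℕ => 2 * (1 + Real.log N) * √(2 / (N : ℝ))) atTop (nhds 0) := by
  have h1 : Tendsto (fun x : ℝ => Real.log x / x ^ (1 / 2 : ℝ)) atTop (nhds 0) :=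
    (isLittleO_log_rpow_atTop (by norm_num : (0 : ℝ) < 1 / 2)).tendsto_div_nhds_zero
  have h2 : Tendsto (fun x : ℝ => x ^ (-(1 / 2) : ℝ)) atTop (nhds 0) :=
    tendsto_rpow_neg_atTop (by norm_num)
  have h3 : Tendsto (fun x : ℝ => 2 * √2 * (x ^ (-(1 / 2) : ℝ) + Real.log x / x ^ (1 / 2 : ℝ)))
      atTop (nhds 0) := by
    have := (h2.add h1).const_mul (2 * √2)
    simpa using this
  refine (h3.comp tendsto_natCast_atTop_atTop).congr fun N => ?_
  simp only [Function.comp]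
  rw [Real.sqrt_div (by norm_num), Real.sqrt_eq_rpow (N : ℝ), Real.rpow_neg (by positivity)]
  ring

lemma analytic_sum (ε : ℝ) (hε : 0 < ε) : ∃ κ0 N1 : ℕ, ∀ κ ≥ κ0, ∀ N ≥ N1,
    (N : ℝ) * ∑ i ∈ Finset.Ico κ N, wgt i / ((N : ℝ) - i) ≤ ε := by
  have t1 := tendsto_sum_nat_add wgt
  obtain ⟨κ0, hκ0⟩ := eventually_atTop.1 (t1.eventually (gt_mem_nhds (half_pos hε)))
  obtain ⟨N1, hN1⟩ := eventually_atTop.1 (tendsto_aux.eventually (gt_mem_nhds (half_pos hε)))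
  refine ⟨κ0, N1, fun κ hκ N hN => ?_⟩
  have e : (N : ℝ) * ∑ i ∈ Finset.Ico κ N, wgt i / ((N : ℝ) - i) =
      ∑ i ∈ Finset.Ico κ N, wgt i + ∑ i ∈ Finset.Ico κ N, wgt i * i / ((N : ℝ) - i) := by
    rw [Finset.mul_sum, ← Finset.sum_add_distrib]
    apply Finset.sum_congr rfl
    intro i hi
    have : i < N := (Finset.mem_Ico.1 hi).2
    have : (i : ℝ) < N := by exact_mod_cast this
    have : (N : ℝ) - i ≠ 0 := by linarith
    field_simp
    ring
  rw [e]
  have b1 : ∑ i ∈ Finset.Ico κ N, wgt i ≤ ε / 2 := by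
    refine le_trans ?_ (hκ0 κ hκ).le
    rw [Finset.sum_Ico_eq_sum_range]
    have := ((summable_nat_add_iff κ).2 summable_wgt).sum_le_tsum (Finset.range (N - κ))
      (fun i _ => wgt_nonneg _)
    simpa [add_comm] using this
  have b2 : ∑ i ∈ Finset.Ico κ N, wgt i * i / ((N : ℝ) - i) ≤ ε / 2 := by
    refine le_trans ?_ (hN1 N hN).le
    have hpos : ∀ i ∈ Finset.range N, 0 ≤ wgt i * i / ((N : ℝ) - i) := by
      intro i hi
      have : (i : ℝ) < N := by exact_mod_cast Finset.mem_range.1 hi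
      have := wgt_nonneg i
      apply div_nonneg (by positivity) (by linarith)
    calc ∑ i ∈ Finset.Ico κ N, wgt i * i / ((N : ℝ) - i)
        ≤ ∑ i ∈ Finset.range N, wgt i * i / ((N : ℝ) - i) := by
          apply Finset.sum_le_sum_of_subset_of_nonneg
          · intro i hi; rw [Finset.mem_range]; exact (Finset.mem_Ico.1 hi).2
          · intro i hi _; exact hpos i hi
      _ ≤ ∑ i ∈ Finset.range N, (1 / ((i : ℝ) + 1) + 1 / ((N : ℝ) - i)) * √(2 / N) :=
          Finset.sum_le_sum fun i hi => term_bound N i (Finset.mem_range.1 hi)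
      _ = (∑ i ∈ Finset.range N, 1 / ((i : ℝ) + 1) + ∑ i ∈ Finset.range N, 1 / ((i : ℝ) + 1))
            * √(2 / N) := by
          rw [← Finset.sum_mul, Finset.sum_add_distrib]
          congr 2
          rw [← Finset.sum_range_reflect]
          apply Finset.sum_congr rfl
          intro i hi
          have : i < N := Finset.mem_range.1 hi
          rw [Nat.sub_sub, Nat.cast_sub (by omega)]
          push_cast
          congr 1; ring
      _ ≤ _ := by
          apply mul_le_mul_of_nonneg_right _ (by positivity)
          have := harm_le N
          linarith
  linarith


open Classical in
/-- the bad primes of a dyadic block -/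
noncomputable def badSet (n κ M N : ℕ) : Finset ℕ := (Finset.Ico (2 ^ N) (2 ^ (N + 1))).filter
  (fun p => p.Prime ∧ M ∣ p + 1 ∧
    ∃ D, TwinType n D ∧ D % 2 = 1 ∧ Nat.Coprime D M ∧ 2 ^ κ < D ∧ D ∣ p - 1)

open Classical in
/-- admissible D in a dyadic block -/
noncomputable def twinBlock (n M i : ℕ) : Finset ℕ := (Finset.range (2 ^ (i + 1))).filter
  (fun D => TwinType n D ∧ D % 2 = 1 ∧ Nat.Coprime D M ∧ 2 ^ i ≤ D)

open Classical in
lemma twin_pow_bound (n : ℕ) (C : ℝ) (hC : 0 < C) (h : ∀ X : ℕ, 1 ≤ X →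
    (((Finset.range X).filter (fun t => TwinType n t)).card : ℝ)
      ≤ C * (X / (Real.log (X + 1)) ^ 2)) (i : ℕ) :
    (((Finset.range (2 ^ (i + 1))).filter (fun t => TwinType n t)).card : ℝ) ≤
      8 * C * (2 ^ i / ((i : ℝ) + 1) ^ 2) := by
  refine (h _ Nat.one_le_two_pow).trans ?_
  have h1 : (((i + 1 : ℕ) : ℝ)) / 2 ≤ Real.log (((2 ^ (i + 1) : ℕ) : ℝ) + 1) :=
    log_two_pow_ge (i + 1) _ (by push_cast; linarith)
  push_cast at h1 ⊢
  calc C * ((2 : ℝ) ^ (i + 1) / Real.log (2 ^ (i + 1) + 1) ^ 2)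
      ≤ C * ((2 : ℝ) ^ (i + 1) / (((i : ℝ) + 1) / 2) ^ 2) := by gcongr
    _ = _ := by field_simp; ring

lemma wgt_eq (i : ℕ) : √(2 * (i : ℝ) + 1) / ((i : ℝ) + 1) ^ 2 ≤ 2 * wgt i := by
  have h0 : (0 : ℝ) ≤ i := by positivity
  have h1 : √(2 * (i : ℝ) + 1) ≤ 2 * √((i : ℝ) + 1) := by
    rw [show (2 : ℝ) = √4 by rw [show (4 : ℝ) = 2 ^ 2 by norm_num]; simp,
      ← Real.sqrt_mul (by norm_num)]
    apply Real.sqrt_le_sqrt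
    rw [show √(4 : ℝ) = 2 by rw [show (4 : ℝ) = 2 ^ 2 by norm_num]; simp]
    linarith
  have hs : √((i : ℝ) + 1) * √((i : ℝ) + 1) = (i : ℝ) + 1 := Real.mul_self_sqrt (by linarith)
  have hs0 : 0 < √((i : ℝ) + 1) := Real.sqrt_pos.2 (by linarith)
  unfold wgt
  rw [mul_one_div, div_le_div_iff₀ (by positivity) (by positivity)]
  calc √(2 * (i : ℝ) + 1) * (((i : ℝ) + 1) * √((i : ℝ) + 1))
      ≤ 2 * √((i : ℝ) + 1) * (((i : ℝ) + 1) * √((i : ℝ) + 1)) := by gcongr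
    _ = 2 * (√((i : ℝ) + 1) * √((i : ℝ) + 1)) * ((i : ℝ) + 1) := by ring
    _ = _ := by rw [hs]; ring

open Classical in
lemma bad_subset (n κ M N m : ℕ) :
    badSet n κ M N ⊆
      (((Finset.Ico κ N).filter (fun i => i + 2 * m ≤ N)).biUnion (fun i =>
        (twinBlock n M i).biUnion (fun D => (Finset.Ico (2 ^ N) (2 ^ (N + 1))).filter
          (fun p => p.Prime ∧ M ∣ p + 1 ∧ D ∣ p - 1)))) ∪
      (((Finset.range (2 ^ (N + 1))).filter (fun t => TwinType n t)) ×ˢ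
        (Finset.range (2 ^ (2 * m)))).image (fun x => x.1 * x.2 + 1) ∪
      (if 1 ≤ m then ∅ else badSet n κ M N) := by
  intro p hp
  by_cases hm : 1 ≤ m
  swap
  · rw [if_neg hm]; exact Finset.mem_union_right _ hp
  rw [if_pos hm, Finset.union_empty]
  unfold badSet at hp
  obtain ⟨hpr, hpp, hpM, D, hT, hD2, hDc, hDk, hDp⟩ := Finset.mem_filter.1 hp
  rw [Finset.mem_Ico] at hpr
  have hD0 : D ≠ 0 := by omega
  have hp2 := hpp.two_le
  have hDle : D ≤ p - 1 := Nat.le_of_dvd (by omega) hDp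
  set i := Nat.log 2 D with hi
  have hi1 : 2 ^ i ≤ D := Nat.pow_log_le_self 2 hD0
  have hi2 : D < 2 ^ (i + 1) := Nat.lt_pow_succ_log_self (by norm_num) D
  have hκi : κ ≤ i := by
    have : 2 ^ κ < 2 ^ (i + 1) := hDk.trans hi2
    have := (Nat.pow_lt_pow_iff_right (by norm_num : 1 < 2)).1 this
    omega
  by_cases hc : i + 2 * m ≤ N
  · apply Finset.mem_union_left
    rw [Finset.mem_biUnion]
    refine ⟨i, Finset.mem_filter.2 ⟨Finset.mem_Ico.2 ⟨hκi, by omega⟩, hc⟩, ?_⟩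
    rw [Finset.mem_biUnion]
    refine ⟨D, Finset.mem_filter.2 ⟨Finset.mem_range.2 hi2, hT, hD2, hDc, hi1⟩, ?_⟩
    exact Finset.mem_filter.2 ⟨Finset.mem_Ico.2 hpr, hpp, hpM, hDp⟩
  · apply Finset.mem_union_right
    obtain ⟨j, hj⟩ := hDp
    rw [Finset.mem_image]
    refine ⟨(D, j), ?_, by simp only; omega⟩
    simp only [Finset.mem_product, Finset.mem_filter, Finset.mem_range]
    refine ⟨⟨by omega, hT⟩, ?_⟩
    by_contra hjl
    push Not at hjl
    have h1 : 2 ^ i * 2 ^ (2 * m) ≤ D * j := Nat.mul_le_mul hi1 hjl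
    rw [← pow_add] at h1
    have h2 : 2 ^ (N + 1) ≤ 2 ^ (i + 2 * m) := Nat.pow_le_pow_right (by norm_num) (by omega)
    omega

theorem bad_count (n : ℕ) (hn : 0 < n) : ∃ κ0 : ℕ, ∀ κ ≥ κ0, ∀ M : ℕ, 0 < M →
    ∃ N0 : ℕ, ∀ N ≥ N0, (N : ℝ) * ((badSet n κ M N).card : ℝ) ≤
      1 / 8 * (2 ^ N / (M.totient : ℝ)) := by
  classical
  obtain ⟨C, hC, hCX⟩ := twin_bound n hn
  obtain ⟨κ0, N1, hκN⟩ := analytic_sum (1 / (16 * (8192 * C))) (by positivity)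
  refine ⟨κ0, fun κ hκ M hM => ?_⟩
  obtain ⟨N2, hN2⟩ := exists_nat_ge (128 * C * 2 ^ (2 * M) * M.totient)
  refine ⟨max N1 N2, fun N hN => ?_⟩
  have hφM : (0 : ℝ) < M.totient := by exact_mod_cast Nat.totient_pos.2 hM
  have hMm : M ≤ 2 ^ M := Nat.lt_two_pow_self.le
  set R : ℝ := 2 ^ N / (M.totient : ℝ) with hR
  have hR0 : 0 < R := by positivity
  have hsub := Finset.card_le_card (bad_subset n κ M N M)
  rw [if_pos (show 1 ≤ M from hM), Finset.union_empty] at hsub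
  have h1 := hsub.trans (Finset.card_union_le _ _)
  -- tail part
  have htail : (((((Finset.range (2 ^ (N + 1))).filter (fun t => TwinType n t)) ×ˢ
        (Finset.range (2 ^ (2 * M)))).image (fun x => x.1 * x.2 + 1)).card : ℝ) ≤
      8 * C * (2 ^ N / ((N : ℝ) + 1) ^ 2) * 2 ^ (2 * M) := by
    have a1 := (Finset.card_image_le (s := ((Finset.range (2 ^ (N + 1))).filter
      (fun t => TwinType n t)) ×ˢ (Finset.range (2 ^ (2 * M)))) (f := fun x => x.1 * x.2 + 1))
    rw [Finset.card_product, Finset.card_range] at a1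
    have a2 := twin_pow_bound n C hC hCX N
    refine (Nat.cast_le.2 a1).trans ?_
    push_cast
    exact mul_le_mul_of_nonneg_right a2 (by positivity)
  -- main part
  have hmain : ((((Finset.Ico κ N).filter (fun i => i + 2 * M ≤ N)).biUnion (fun i =>
        (twinBlock n M i).biUnion (fun D => (Finset.Ico (2 ^ N) (2 ^ (N + 1))).filter
          (fun p => p.Prime ∧ M ∣ p + 1 ∧ D ∣ p - 1)))).card : ℝ) ≤
      8192 * C * R * ∑ i ∈ Finset.Ico κ N, wgt i / ((N : ℝ) - i) := by
    refine (Nat.cast_le.2 Finset.card_biUnion_le).trans ?_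
    push_cast
    have hterm : ∀ i ∈ (Finset.Ico κ N).filter (fun i => i + 2 * M ≤ N),
        (((twinBlock n M i).biUnion (fun D => (Finset.Ico (2 ^ N) (2 ^ (N + 1))).filter
          (fun p => p.Prime ∧ M ∣ p + 1 ∧ D ∣ p - 1))).card : ℝ) ≤
        8192 * C * R * (wgt i / ((N : ℝ) - i)) := by
      intro i hi
      have hi' := Finset.mem_filter.1 hi
      have hiN : i < N := (Finset.mem_Ico.1 hi'.1).2
      have hNi : (0 : ℝ) < (N : ℝ) - i := by
        have : (i : ℝ) < N := by exact_mod_cast hiN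
        linarith
      refine (Nat.cast_le.2 Finset.card_biUnion_le).trans ?_
      push_cast
      have c1 : ∀ D ∈ twinBlock n M i, (((Finset.Ico (2 ^ N) (2 ^ (N + 1))).filter
          (fun p => p.Prime ∧ M ∣ p + 1 ∧ D ∣ p - 1)).card : ℝ) ≤
          512 * R * (√(2 * i + 1) / (2 ^ i * ((N : ℝ) - i))) := by
        intro D hD
        obtain ⟨hDr, hT, hD2, hDc, hDi⟩ := Finset.mem_filter.1 hD
        exact count_single D M N M i hD2 hM hDc hMm hM hi'.2 hDi (Finset.mem_range.1 hDr)
      have c2 : ((twinBlock n M i).card : ℝ) ≤ 8 * C * (2 ^ i / ((i : ℝ) + 1) ^ 2) := by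
        refine le_trans ?_ (twin_pow_bound n C hC hCX i)
        apply Nat.cast_le.2
        apply Finset.card_le_card
        intro D hD
        obtain ⟨hDr, hT, _⟩ := Finset.mem_filter.1 hD
        exact Finset.mem_filter.2 ⟨hDr, hT⟩
      refine (Finset.sum_le_sum c1).trans ?_
      rw [Finset.sum_const, nsmul_eq_mul]
      calc ((twinBlock n M i).card : ℝ) * (512 * R * (√(2 * i + 1) / (2 ^ i * ((N : ℝ) - i))))
          ≤ (8 * C * (2 ^ i / ((i : ℝ) + 1) ^ 2)) *
            (512 * R * (√(2 * i + 1) / (2 ^ i * ((N : ℝ) - i)))) :=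
            mul_le_mul_of_nonneg_right c2 (by positivity)
        _ = 4096 * C * R * ((√(2 * i + 1) / ((i : ℝ) + 1) ^ 2) / ((N : ℝ) - i)) := by
            field_simp; ring
        _ ≤ 4096 * C * R * ((2 * wgt i) / ((N : ℝ) - i)) := by
            have := wgt_eq i
            gcongr
        _ = _ := by ring
    refine (Finset.sum_le_sum hterm).trans ?_
    rw [← Finset.mul_sum]
    apply mul_le_mul_of_nonneg_left _ (by positivity)
    apply Finset.sum_le_sum_of_subset_of_nonneg (Finset.filter_subset _ _)
    intro i hi _
    have hiN : i < N := (Finset.mem_Ico.1 hi).2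
    have : (i : ℝ) < N := by exact_mod_cast hiN
    exact div_nonneg (wgt_nonneg i) (by linarith)
  have h2 : ((badSet n κ M N).card : ℝ) ≤
      8192 * C * R * ∑ i ∈ Finset.Ico κ N, wgt i / ((N : ℝ) - i) +
      8 * C * (2 ^ N / ((N : ℝ) + 1) ^ 2) * 2 ^ (2 * M) := by
    refine (Nat.cast_le.2 h1).trans ?_
    rw [Nat.cast_add]
    exact add_le_add hmain htail
  have h3 := hκN κ hκ N (le_trans (le_max_left _ _) hN)
  have hNN2 : (128 * C * 2 ^ (2 * M) * M.totient : ℝ) ≤ N :=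
    hN2.trans (by exact_mod_cast le_trans (le_max_right _ _) hN)
  have p1 : (N : ℝ) * (8192 * C * R * ∑ i ∈ Finset.Ico κ N, wgt i / ((N : ℝ) - i)) ≤ 1 / 16 * R := by
    calc (N : ℝ) * (8192 * C * R * ∑ i ∈ Finset.Ico κ N, wgt i / ((N : ℝ) - i))
        = 8192 * C * R * (N * ∑ i ∈ Finset.Ico κ N, wgt i / ((N : ℝ) - i)) := by ring
      _ ≤ 8192 * C * R * (1 / (16 * (8192 * C))) := mul_le_mul_of_nonneg_left h3 (by positivity)
      _ = _ := by field_simp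
  have p2 : (N : ℝ) * (8 * C * (2 ^ N / ((N : ℝ) + 1) ^ 2) * 2 ^ (2 * M)) ≤ 1 / 16 * R := by
    have hN0 : (0 : ℝ) ≤ N := by positivity
    rw [hR]
    have e : (N : ℝ) * (8 * C * (2 ^ N / ((N : ℝ) + 1) ^ 2) * 2 ^ (2 * M)) =
        (8 * C * 2 ^ (2 * M) * N * 2 ^ N) / ((N : ℝ) + 1) ^ 2 := by ring
    have e2 : 1 / 16 * ((2 : ℝ) ^ N / (M.totient : ℝ)) = 2 ^ N / (16 * M.totient) := by
      field_simp
    rw [e, e2, div_le_div_iff₀ (by positivity) (by positivity)]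
    calc 8 * C * 2 ^ (2 * M) * N * 2 ^ N * (16 * (M.totient : ℝ))
        = 2 ^ N * (N * (128 * C * 2 ^ (2 * M) * M.totient)) := by ring
      _ ≤ 2 ^ N * (((N : ℝ) + 1) ^ 2) := by
        apply mul_le_mul_of_nonneg_left _ (by positivity)
        calc (N : ℝ) * (128 * C * 2 ^ (2 * M) * M.totient) ≤ N * N := by gcongr
          _ ≤ _ := by nlinarith
  calc (N : ℝ) * ((badSet n κ M N).card : ℝ) ≤ N * _ := mul_le_mul_of_nonneg_left h2 (by positivity)
    _ ≤ 1 / 16 * R + 1 / 16 * R := by rw [mul_add]; exact add_le_add p1 p2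
    _ = _ := by ring

theorem exists_multiple_with_one_more_shifted_prime_divisor (n : ℕ) (hn : 0 < n)
    (heven : 2 ∣ n) :
    ∃ m : ℕ, 0 < m ∧ n ∣ m ∧ omegaStar m = omegaStar n + 1 := by
  by_contra hno
  obtain ⟨κ0, hκ0⟩ := bad_count n hn
  set κ := max κ0 (n + 2) with hκ
  have hK : n + 2 < 2 ^ κ := lt_of_le_of_lt (le_max_right κ0 (n + 2)) Nat.lt_two_pow_self
  have hK4 : 4 ≤ 2 ^ κ := by
    have : 2 ^ 2 ≤ 2 ^ κ := Nat.pow_le_pow_right (by norm_num) (by omega)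
    simpa using this
  obtain ⟨N0, hN0⟩ := hκ0 κ (le_max_left _ _) (Nat.factorial (2 ^ κ)) (Nat.factorial_pos _)
  refine dirichlet_dyadic (Nat.factorial (2 ^ κ)) (Nat.factorial_pos _) (max N0 (n + 2)) fun N hN => ?_
  refine le_trans ?_ (hN0 N (le_trans (le_max_left _ _) hN))
  apply mul_le_mul_of_nonneg_left _ (by positivity)
  apply Nat.cast_le.2
  apply Finset.card_le_card
  intro p hp
  obtain ⟨hr, hpp, hpM⟩ := Finset.mem_filter.1 hp
  classical
  unfold badSet
  rw [Finset.mem_filter]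
  refine ⟨hr, hpp, hpM, ?_⟩
  refine bad_prime n hn heven hno (2 ^ κ) hK4 (by omega) p hpp ?_ hpM
  have h1 := (Finset.mem_Ico.1 hr).1
  have h2 : N < 2 ^ N := Nat.lt_two_pow_self
  have h3 : n + 2 ≤ N := le_trans (le_max_right _ _) hN
  omega
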